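/- arXiv:2006.10549 — 4 statements merged into one kernel-verified Lean document; each statement's English description precedes it below -/
import Mathlib

section
/- Let k ≥ 2 be an integer and let f be a cusp form of weight 2k for SL₂(ℤ). Then for all τ ∈ ℍ one has (R_{2−2k}^{k−1} f^*)(τ) = −((2k−2)!/(4π)^{2k−1}) · conj((R_{2−2k}^{k−1} ℰ_f)(τ)). -/
open Complex MeasureTheory
open scoped Real

noncomputable section

namespace LHMF

abbrev SL2Z := Matrix.SpecialLinearGroup (Fin 2) ℤ

/-- Möbius action of `SL₂(ℤ)` on `ℂ`. -/
def moeb (M : SL2Z) (τ : ℂ) : ℂ :=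
  ((M.1 0 0 : ℂ) * τ + (M.1 0 1 : ℂ)) / ((M.1 1 0 : ℂ) * τ + (M.1 1 1 : ℂ))

/-- Automorphy factor `j(M,τ) = cτ + d`. -/
def jfac (M : SL2Z) (τ : ℂ) : ℂ := (M.1 1 0 : ℂ) * τ + (M.1 1 1 : ℂ)

/-- `E₁`: union of all `SL₂(ℤ)`-translates of the positive imaginary axis. -/
def E1 : Set ℂ := ⋃ M : SL2Z, (fun y : ℝ => moeb M ((y : ℂ) * Complex.I)) '' Set.Ioi 0

/-- Wirtinger derivative `∂f/∂τ`. -/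
def dtau (f : ℂ → ℂ) (τ : ℂ) : ℂ :=
  (fderiv ℝ f τ 1 - Complex.I * fderiv ℝ f τ Complex.I) / 2

/-- Wirtinger derivative `∂f/∂τ̄`. -/
def dtaubar (f : ℂ → ℂ) (τ : ℂ) : ℂ :=
  (fderiv ℝ f τ 1 + Complex.I * fderiv ℝ f τ Complex.I) / 2

/-- The operator `ξ_κ f = 2i v^κ conj(∂f/∂τ̄)`. -/
def xiOp (κ : ℤ) (f : ℂ → ℂ) (τ : ℂ) : ℂ :=
  2 * Complex.I * ((τ.im : ℂ) ^ κ) * starRingEnd ℂ (dtaubar f τ)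

/-- The operator `𝒟 = (1/(2πi)) ∂/∂τ`. -/
def Dop (f : ℂ → ℂ) : ℂ → ℂ := fun τ => (2 * (π : ℂ) * Complex.I)⁻¹ * dtau f τ

/-- Maass raising operator of weight `κ`. -/
def raiseOp (κ : ℤ) (f : ℂ → ℂ) (τ : ℂ) : ℂ :=
  2 * Complex.I * dtau f τ + (κ : ℂ) * (τ.im : ℂ)⁻¹ * f τ

/-- Iterated raising operator `R_κ^m = R_{κ+2m-2} ∘ ⋯ ∘ R_{κ+2} ∘ R_κ`. -/
def raiseIter (κ : ℤ) : ℕ → (ℂ → ℂ) → (ℂ → ℂ)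
  | 0 => fun f => f
  | m + 1 => fun f => raiseOp (κ + 2 * m) (raiseIter κ m f)

/-- Petersson's Poincaré series `H_{k,k-1}(z,τ)`. -/
def Hpet (k : ℕ) (z τ : ℂ) : ℂ :=
  ∑' M : SL2Z, jfac M τ ^ (2 * k - 2) * ((moeb M τ).im : ℂ) ^ (2 * k - 1) *
    (z - moeb M τ)⁻¹ * (z - starRingEnd ℂ (moeb M τ)) ^ (1 - 2 * (k : ℤ))

/-- The locally harmonic Maass form `H_{1-k,n}`. -/
def Hlhmf (k n : ℕ) (τ : ℂ) : ℂ :=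
  (2 * Complex.I) ^ (2 * k - 2) / (2 * (π : ℂ)) *
    ∫ y in Set.Ioi (0 : ℝ), Hpet k ((y : ℂ) * Complex.I) τ * (y : ℂ) ^ n

/-- The cusp form `R_n` of weight `2k`. -/
def Rnform (k n : ℕ) (τ : ℂ) : ℂ :=
  (2 : ℂ) ^ (2 * k - 3) / (Complex.I ^ (2 * k - 1 - n) * (Nat.choose (2 * k - 2) n : ℂ) * (π : ℂ)) *
    ∑' M : SL2Z, jfac M τ ^ (-2 * (k : ℤ)) * moeb M τ ^ (-(n : ℤ) - 1)

/-- Holomorphic Eichler integral of `f` (weight `2k`), along a vertical path. -/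
def eichlerHol (k : ℕ) (f : ℂ → ℂ) (τ : ℂ) : ℂ :=
  (-2 * (π : ℂ) * Complex.I) ^ (2 * k - 1) / (Nat.factorial (2 * k - 2) : ℂ) *
    ∫ t in Set.Ioi (0 : ℝ), f (τ + (t : ℂ) * Complex.I) * ((t : ℂ) * Complex.I) ^ (2 * k - 2) *
      Complex.I

/-- Non-holomorphic Eichler integral `f^*` of `f` (weight `2k`), along a vertical path. -/
def eichlerStar (k : ℕ) (f : ℂ → ℂ) (τ : ℂ) : ℂ :=
  (-2 * Complex.I) ^ (1 - 2 * (k : ℤ)) *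
    ∫ t in Set.Ioi (0 : ℝ),
      starRingEnd ℂ (f (-(starRingEnd ℂ (-(starRingEnd ℂ τ) + (t : ℂ) * Complex.I)))) *
        (-(starRingEnd ℂ τ) + (t : ℂ) * Complex.I + τ) ^ (2 * k - 2) * Complex.I

/-- Bernoulli polynomial evaluated at a complex number. -/
def bernC (m : ℕ) (τ : ℂ) : ℂ := Polynomial.aeval τ (Polynomial.bernoulli m)

/-- Periodized Bernoulli polynomial `𝔹_m(τ) = B_m(τ - ⌊Re τ⌋)`. -/
def bernPer (m : ℕ) (τ : ℂ) : ℂ := bernC m (τ - (⌊τ.re⌋ : ℂ))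

/-- The period `r_n(E_{2k})` of the Eisenstein series, for `0 < n < 2k-2`. -/
def rnE (k n : ℕ) : ℚ :=
  if n % 2 = 0 then 0
  else (-1) ^ ((n - 1) / 2) * (2 * (k : ℚ)) * bernoulli (n + 1) * bernoulli (2 * k - 1 - n) /
    (bernoulli (2 * k) * ((n : ℚ) + 1) * ((2 * k - 1 - n : ℕ) : ℚ))

/-- The local polynomial `P_{1-k,n}`. -/
def Ppoly (k n : ℕ) (τ : ℂ) : ℂ :=
  (rnE k n : ℂ)
  + (-Complex.I) ^ (n + 1) / ((n : ℂ) + 1) * bernPer (n + 1) τ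
  + Complex.I ^ (n + 1) / ((2 * k - 1 - n : ℕ) : ℂ) * bernPer (2 * k - 1 - n) τ
  + Complex.I ^ (1 - (n : ℤ)) / 2 *
      ∑' M : {M : SL2Z // 0 < M.1 0 0 * M.1 1 0 ∧ (moeb M τ).re < 0},
        jfac M.1 τ ^ (2 * k - 2) *
          (moeb M.1 τ ^ n - (-1 : ℂ) ^ n * moeb M.1 τ ^ (2 * k - 2 - n))

/-- The binary quadratic form `[a,b,c]` evaluated at complex arguments. -/
def qfC (a b c : ℤ) (x y : ℂ) : ℂ := (a : ℂ) * x ^ 2 + (b : ℂ) * x * y + (c : ℂ) * y ^ 2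

/-- CM point of the positive definite form `[a,b,c]`. -/
def cmPoint (a b c : ℤ) : ℂ :=
  (-(b : ℂ) + Complex.I * ((Real.sqrt (((b ^ 2 - 4 * a * c).natAbs : ℝ))) : ℂ)) / (2 * (a : ℂ))

/-- The form `[a,b,c] ∘ M`. -/
def qfComp (a b c : ℤ) (M : SL2Z) : ℤ × ℤ × ℤ :=
  (a * (M.1 0 0) ^ 2 + b * (M.1 0 0) * (M.1 1 0) + c * (M.1 1 0) ^ 2,
   2 * a * (M.1 0 0) * (M.1 0 1) + b * ((M.1 0 0) * (M.1 1 1) + (M.1 0 1) * (M.1 1 0)) +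
     2 * c * (M.1 1 0) * (M.1 1 1),
   a * (M.1 0 1) ^ 2 + b * (M.1 0 1) * (M.1 1 1) + c * (M.1 1 1) ^ 2)

/-- `w_P`: order of the stabilizer of `P = [a,b,c]` in `PSL₂(ℤ)` (half the order of the
stabilizer in `SL₂(ℤ)`, which contains `±1`). -/
def wP (a b c : ℤ) : ℕ := Nat.card {M : SL2Z // qfComp a b c M = (a, b, c)} / 2

/-- The meromorphic modular form `f_{k,P}` for `P = [a,b,c]`. -/
def fkP (k : ℕ) (a b c : ℤ) (z : ℂ) : ℂ :=
  (((((b ^ 2 - 4 * a * c).natAbs : ℝ)) ^ ((k : ℝ) - 1 / 2) : ℝ) : ℂ) /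
      (2 * (π : ℂ) * (wP a b c : ℂ)) *
    ∑' M : SL2Z, (qfC a b c ((M.1 0 0 : ℂ) * z + (M.1 0 1 : ℂ))
      ((M.1 1 0 : ℂ) * z + (M.1 1 1 : ℂ))) ^ (-(k : ℤ))

/-- The `n`-th period `r_n(f) = ∫₀^∞ f(iy) y^n dy`. -/
def periodN (n : ℕ) (f : ℂ → ℂ) : ℂ :=
  ∫ y in Set.Ioi (0 : ℝ), f ((y : ℂ) * Complex.I) * (y : ℂ) ^ n

/-- Epstein zeta function of `[a,b,c]` at an integer `k`. -/
def epstein (a b c : ℤ) (k : ℕ) : ℝ :=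
  ∑' p : {p : ℤ × ℤ // p ≠ (0, 0)},
    ((a * p.1.1 ^ 2 + b * p.1.1 * p.1.2 + c * p.1.2 ^ 2 : ℤ) : ℝ) ^ (-(k : ℤ))

/-- `sgn(M)` for `M = (a,b;c,d)`: `sgn(ac)` if `ac ≠ 0`, else `sgn(bd)`. -/
def sgnM (M : SL2Z) : ℤ :=
  if M.1 0 0 * M.1 1 0 ≠ 0 then Int.sign (M.1 0 0 * M.1 1 0) else Int.sign (M.1 0 1 * M.1 1 1)

/-- Upper incomplete Gamma function `Γ(s,x)` for a natural number `s`. -/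
def GammaUpper (s : ℕ) (x : ℝ) : ℝ := ∫ t in Set.Ioi x, Real.exp (-t) * t ^ (s - 1)

/-- A cusp form of weight `2k` for `SL₂(ℤ)`, as a function on `ℂ` (holomorphic on `ℍ`,
modular of weight `2k`, vanishing at the cusp `i∞`). -/
def IsCuspForm2k (k : ℕ) (f : ℂ → ℂ) : Prop :=
  (∀ τ : ℂ, 0 < τ.im → DifferentiableAt ℂ f τ) ∧
  (∀ (M : SL2Z) (τ : ℂ), 0 < τ.im → f (moeb M τ) = jfac M τ ^ (2 * k) * f τ) ∧
  Filter.Tendsto f (Filter.comap Complex.im Filter.atTop) (nhds 0)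

/-!
Write `J_{p,q}(τ) = ∫₀^∞ f(τ + it) t^p (t + 2v)^q dt`. Up to constants `ℰ_f` is `J_{2k-2,0}`
and `f^*` is the conjugate of `J_{0,2k-2}`. The operator `∂/∂τ` hits the holomorphic factor
`f(τ + it)` and the weight `(t + 2v)^q`; an integration by parts in `t` combines the two into
`∂J_{p,q}/∂τ = i p J_{p-1,q}`. On conjugates only the weight is seen, so
`∂(conj J_{p,q})/∂τ = -i q conj J_{p,q-1}`. Since `J_{p,q+1} = J_{p+1,q} + 2v J_{p,q}`, each raising
step therefore turns a factor `t` into `t + 2v` in the first case and a factor `t + 2v` into `t` in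
the second, and after `k - 1` steps both integrals have arrived at `J_{k-1,k-1}`, up to conjugation
and the same power of `v`. Rapid decay at `i∞`, which `f` shares with its derivative, justifies
the differentiation under the integral and the integration by parts.
-/

open Filter Set Topology
open UpperHalfPlane (upperHalfPlaneSet isOpen_upperHalfPlaneSet)

section Wirtinger

/-- `f` is real differentiable at `τ` with Wirtinger derivative `∂f/∂τ = d`; it plays for `dtau`
the role that `HasDerivAt` plays for `deriv`. -/
def HasDtauAt (f : ℂ → ℂ) (d τ : ℂ) : Prop :=
  ∃ f' : ℂ →L[ℝ] ℂ, HasFDerivAt f f' τ ∧ (f' 1 - I * f' I) / 2 = d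

variable {f g : ℂ → ℂ} {d e τ : ℂ}

protected lemma HasDtauAt.dtau (hf : HasDtauAt f d τ) : dtau f τ = d := by
  obtain ⟨f', hf, rfl⟩ := hf
  rw [dtau, hf.fderiv]

lemma HasDtauAt.differentiableAt (hf : HasDtauAt f d τ) : DifferentiableAt ℝ f τ :=
  hf.choose_spec.1.differentiableAt

lemma hasDtauAt_dtau (hf : DifferentiableAt ℝ f τ) : HasDtauAt f (dtau f τ) τ :=
  ⟨_, hf.hasFDerivAt, rfl⟩

lemma HasDtauAt.congr_of_eventuallyEq (hf : HasDtauAt f d τ) (h : g =ᶠ[𝓝 τ] f) :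
    HasDtauAt g d τ := by
  obtain ⟨f', hf, rfl⟩ := hf
  exact ⟨f', hf.congr_of_eventuallyEq h, rfl⟩

lemma HasDtauAt.add (hf : HasDtauAt f d τ) (hg : HasDtauAt g e τ) :
    HasDtauAt (fun z ↦ f z + g z) (d + e) τ := by
  obtain ⟨f', hf, rfl⟩ := hf
  obtain ⟨g', hg, rfl⟩ := hg
  refine ⟨f' + g', hf.add hg, ?_⟩
  simp only [_root_.add_apply]
  ring

lemma HasDtauAt.mul (hf : HasDtauAt f d τ) (hg : HasDtauAt g e τ) :
    HasDtauAt (fun z ↦ f z * g z) (f τ * e + g τ * d) τ := by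
  obtain ⟨f', hf, rfl⟩ := hf
  obtain ⟨g', hg, rfl⟩ := hg
  refine ⟨f τ • g' + g τ • f', hf.mul hg, ?_⟩
  simp only [_root_.add_apply, _root_.smul_apply, smul_eq_mul]
  ring

lemma HasDtauAt.comp_hasDerivAt (hg : HasDerivAt g e (f τ)) (hf : HasDtauAt f d τ) :
    HasDtauAt (fun z ↦ g (f z)) (e * d) τ := by
  obtain ⟨f', hf, rfl⟩ := hf
  refine ⟨_, hg.complexToReal_fderiv.comp τ hf, ?_⟩
  simp only [ContinuousLinearMap.comp_apply, _root_.smul_apply, one_apply_eq_self,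
    smul_eq_mul]
  ring

lemma HasDtauAt.const_mul (c : ℂ) (hf : HasDtauAt f d τ) :
    HasDtauAt (fun z ↦ c * f z) (c * d) τ := by
  simpa using hf.comp_hasDerivAt ((hasDerivAt_id _).const_mul c)

lemma hasDtauAt_of_hasDerivAt (hf : HasDerivAt f d τ) : HasDtauAt f d τ := by
  refine ⟨_, hf.complexToReal_fderiv, ?_⟩
  simp only [_root_.smul_apply, one_apply_eq_self, smul_eq_mul]
  linear_combination (-d / 2) * I_sq

lemma hasDtauAt_conj_of_hasDerivAt (hf : HasDerivAt f d τ) :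
    HasDtauAt (fun z ↦ starRingEnd ℂ (f z)) 0 τ := by
  refine ⟨_, (conjCLE : ℂ →L[ℝ] ℂ).hasFDerivAt.comp τ hf.complexToReal_fderiv, ?_⟩
  simp only [ContinuousLinearMap.comp_apply, ContinuousLinearEquiv.coe_coe, conjCLE_apply,
    _root_.smul_apply, one_apply_eq_self, smul_eq_mul, mul_one, map_mul, conj_I]
  linear_combination starRingEnd ℂ d / 2 * I_sq

lemma hasDtauAt_im (τ : ℂ) : HasDtauAt (fun z ↦ (z.im : ℂ)) (-I / 2) τ :=
  ⟨_, (ofRealCLM.comp imCLM).hasFDerivAt, by simp⟩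

end Wirtinger

section Raising

variable {f g : ℂ → ℂ} {τ : ℂ}

lemma raiseOp_congr (κ : ℤ) (h : f =ᶠ[𝓝 τ] g) : raiseOp κ f τ = raiseOp κ g τ := by
  simp only [raiseOp, dtau, h.fderiv_eq, h.eq_of_nhds]

lemma raiseOp_const_mul (κ : ℤ) (c : ℂ) (f : ℂ → ℂ) :
    raiseOp κ (fun z ↦ c * f z) = fun z ↦ c * raiseOp κ f z := by
  funext τ
  have h : fderiv ℝ (fun z ↦ c * f z) τ = c • fderiv ℝ f τ :=
    congrFun (fderiv_const_smul_field (𝕜 := ℝ) (f := f) c) τ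
  simp only [raiseOp, dtau, h, _root_.smul_apply, smul_eq_mul]
  ring

lemma raiseIter_succ (κ : ℤ) (m : ℕ) (f : ℂ → ℂ) :
    raiseIter κ (m + 1) f = raiseOp (κ + 2 * m) (raiseIter κ m f) := rfl

lemma raiseIter_const_mul (κ : ℤ) (m : ℕ) (c : ℂ) (f : ℂ → ℂ) :
    raiseIter κ m (fun z ↦ c * f z) = fun z ↦ c * raiseIter κ m f z := by
  induction m with
  | zero => rfl
  | succ m ih => simp only [raiseIter_succ, ih, raiseOp_const_mul]

lemma raiseOp_im_zpow_mul (κ s : ℤ) (hτ : 0 < τ.im) (hg : DifferentiableAt ℝ g τ) :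
    raiseOp κ (fun z ↦ (z.im : ℂ) ^ s * g z) τ = (τ.im : ℂ) ^ s * raiseOp (κ + s) g τ := by
  have hv : (τ.im : ℂ) ≠ 0 := ofReal_ne_zero.2 hτ.ne'
  have h := ((hasDtauAt_im τ).comp_hasDerivAt (hasDerivAt_zpow s _ (.inl hv))).mul
    (hasDtauAt_dtau hg)
  rw [raiseOp, h.dtau, raiseOp, zpow_sub_one₀ hv]
  push_cast
  linear_combination (-s * (τ.im : ℂ) ^ s * (τ.im : ℂ)⁻¹ * g τ) * I_sq

/-- A doubly indexed family on which raising in weight `-(p + 1)` moves `A (p + 1) r` to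
`A p (r + 1)`, up to the factor `-(p + 1) / v`. The weight does not depend on `r`. -/
structure IsRaisingLadder (A : ℕ → ℕ → ℂ → ℂ) : Prop where
  differentiableAt (p r : ℕ) {τ : ℂ} (hτ : 0 < τ.im) : DifferentiableAt ℝ (A (p + 1) r) τ
  raiseOp_eq (p r : ℕ) {τ : ℂ} (hτ : 0 < τ.im) :
    raiseOp (-(p + 1)) (A (p + 1) r) τ = -(p + 1) * (τ.im : ℂ)⁻¹ * A p (r + 1) τ

-- Multiplication by `v ^ (-r)` shifts the weight by `-r`, which turns the weights
-- `-n, -n + 2, -n + 4, …` of the iteration into the weights `-n, -n + 1, -n + 2, …` of the ladder.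
lemma IsRaisingLadder.raiseIter_eq {A : ℕ → ℕ → ℂ → ℂ} (hA : IsRaisingLadder A) {n p r : ℕ}
    (hn : p + r = n) (hτ : 0 < τ.im) :
    raiseIter (-n) r (A n 0) τ =
      (-1) ^ r * n.descFactorial r * ((τ.im : ℂ) ^ (-r : ℤ) * A p r τ) := by
  induction r generalizing p τ with
  | zero => simp [raiseIter, ← hn]
  | succ r ih =>
    have hn' : p + 1 + r = n := by omega
    have hloc : raiseIter (-n) r (A n 0) =ᶠ[𝓝 τ] fun z ↦
        (-1) ^ r * n.descFactorial r * ((z.im : ℂ) ^ (-r : ℤ) * A (p + 1) r z) :=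
      eventually_of_mem (isOpen_upperHalfPlaneSet.mem_nhds hτ) fun z hz ↦ ih hn' hz
    have hweight : -(n : ℤ) + 2 * r + -r = -(p + 1) := by omega
    have hv : (τ.im : ℂ) ≠ 0 := ofReal_ne_zero.2 hτ.ne'
    have hpow : (τ.im : ℂ) ^ (-(r + 1 : ℕ) : ℤ) = (τ.im : ℂ) ^ (-r : ℤ) * (τ.im : ℂ)⁻¹ := by
      rw [Nat.cast_succ, neg_add, zpow_add₀ hv, zpow_neg_one]
    rw [raiseIter_succ, raiseOp_congr _ hloc, raiseOp_const_mul]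
    beta_reduce
    rw [raiseOp_im_zpow_mul _ _ hτ (hA.differentiableAt p r hτ), hweight, hA.raiseOp_eq p r hτ,
      hpow, Nat.descFactorial_succ, show n - r = p + 1 by omega]
    push_cast
    ring

end Raising

section RapidDecay

/-- Functions holomorphic on the upper half-plane that, together with all their products with
powers of `t`, tend to zero along the vertical rays `z + it`, locally uniformly in `z`. Cusp forms
are the main example; unlike modularity, this property is inherited by the derivative. -/
structure HolomorphicRapidDecay (f : ℂ → ℂ) : Prop where
  differentiableOn : DifferentiableOn ℂ f upperHalfPlaneSet
  tendsto (n : ℕ) : TendstoLocallyUniformlyOn (fun (t : ℝ) z ↦ (t : ℂ) ^ n * f (z + t * I)) 0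
    atTop upperHalfPlaneSet

lemma add_mul_I_mem_upperHalfPlaneSet {z : ℂ} (hz : 0 < z.im) {t : ℝ} (ht : 0 ≤ t) :
    z + t * I ∈ upperHalfPlaneSet := by
  simpa [upperHalfPlaneSet] using add_pos_of_pos_of_nonneg hz ht

namespace HolomorphicRapidDecay

variable {f : ℂ → ℂ} (hf : HolomorphicRapidDecay f) {τ : ℂ}
include hf

lemma hasDerivAt (hτ : 0 < τ.im) : HasDerivAt f (deriv f τ) τ :=
  (hf.differentiableOn.differentiableAt (isOpen_upperHalfPlaneSet.mem_nhds hτ)).hasDerivAt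

protected lemma deriv : HolomorphicRapidDecay (deriv f) where
  differentiableOn := hf.differentiableOn.deriv isOpen_upperHalfPlaneSet
  tendsto n := by
    have hderiv (t : ℝ) (ht : 0 ≤ t) (z : ℂ) (hz : z ∈ upperHalfPlaneSet) :
        HasDerivAt (fun z ↦ (t : ℂ) ^ n * f (z + t * I)) (t ^ n * deriv f (z + t * I)) z :=
      ((hf.hasDerivAt (add_mul_I_mem_upperHalfPlaneSet hz ht)).comp_add_const z _).const_mul _
    have hlim := (hf.tendsto n).deriv
      ((eventually_ge_atTop 0).mono fun t ht z hz ↦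
        (hderiv t ht z hz).differentiableAt.differentiableWithinAt) isOpen_upperHalfPlaneSet
    rw [show deriv (0 : ℂ → ℂ) = 0 from funext fun z ↦ deriv_const z 0] at hlim
    intro u hu z hz
    obtain ⟨s, hs, hlim⟩ := hlim u hu z hz
    refine ⟨s ∩ upperHalfPlaneSet, inter_mem hs self_mem_nhdsWithin, ?_⟩
    filter_upwards [hlim, eventually_ge_atTop 0] with t ht ht0 w hw
    simpa [(hderiv t ht0 w hw.2).deriv] using ht w hw.1

lemma exists_norm_pow_mul_le {K : Set ℂ} (hK : IsCompact K) (hKH : K ⊆ upperHalfPlaneSet) (n : ℕ) :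
    ∃ C, ∀ z ∈ K, ∀ t : ℝ, 0 ≤ t → ‖(t : ℂ) ^ n * f (z + t * I)‖ ≤ C := by
  have htail := (tendstoLocallyUniformlyOn_iff_forall_isCompact isOpen_upperHalfPlaneSet).1
    (hf.tendsto n) K hKH hK
  obtain ⟨T, hT⟩ := eventually_atTop.1 (Metric.tendstoUniformlyOn_iff.1 htail 1 one_pos)
  have hcont : ContinuousOn (fun x : ℂ × ℝ ↦ (x.2 : ℂ) ^ n * f (x.1 + x.2 * I)) (K ×ˢ Icc 0 T) :=
    ContinuousOn.mul (by fun_prop) <| hf.differentiableOn.continuousOn.comp (by fun_prop)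
      fun x hx ↦ add_mul_I_mem_upperHalfPlaneSet (hKH hx.1) hx.2.1
  obtain ⟨B, hB⟩ := (hK.prod isCompact_Icc).exists_bound_of_continuousOn hcont
  refine ⟨max B 1, fun z hz t ht ↦ ?_⟩
  rcases le_total t T with htT | hTt
  · exact (hB (z, t) ⟨hz, ht, htT⟩).trans (le_max_left _ _)
  · exact (by simpa using (hT t hTt z hz).le : _ ≤ (1 : ℝ)).trans (le_max_right _ _)

lemma exists_norm_mul_pow_le {K : Set ℂ} (hK : IsCompact K) (hKH : K ⊆ upperHalfPlaneSet) (n : ℕ) :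
    ∃ C, ∀ z ∈ K, ∀ t : ℝ, 0 ≤ t → ‖f (z + t * I) * (t : ℂ) ^ n‖ ≤ C * (1 + t ^ 2)⁻¹ := by
  obtain ⟨B, hB⟩ := hf.exists_norm_pow_mul_le hK hKH n
  obtain ⟨C, hC⟩ := hf.exists_norm_pow_mul_le hK hKH (n + 2)
  refine ⟨B + C, fun z hz t ht ↦ ?_⟩
  have hpos : 0 < 1 + t ^ 2 := by positivity
  rw [← div_eq_mul_inv, le_div_iff₀ hpos]
  calc ‖f (z + t * I) * (t : ℂ) ^ n‖ * (1 + t ^ 2)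
      = ‖(t : ℂ) ^ n * f (z + t * I)‖ + ‖(t : ℂ) ^ (n + 2) * f (z + t * I)‖ := by
        simp only [norm_mul, norm_pow, norm_real, Real.norm_of_nonneg ht]
        ring
    _ ≤ B + C := add_le_add (hB z hz t ht) (hC z hz t ht)

lemma aestronglyMeasurable_mul_pow (hτ : 0 < τ.im) (n : ℕ) :
    AEStronglyMeasurable (fun t : ℝ ↦ f (τ + t * I) * (t : ℂ) ^ n) (volume.restrict (Ioi 0)) := by
  refine ContinuousOn.aestronglyMeasurable ?_ measurableSet_Ioi
  exact (hf.differentiableOn.continuousOn.comp (by fun_prop)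
    fun t ht ↦ add_mul_I_mem_upperHalfPlaneSet hτ (le_of_lt ht)).mul (by fun_prop)

lemma integrableOn_mul_pow (hτ : 0 < τ.im) (n : ℕ) :
    IntegrableOn (fun t : ℝ ↦ f (τ + t * I) * (t : ℂ) ^ n) (Ioi 0) := by
  obtain ⟨C, hC⟩ := hf.exists_norm_mul_pow_le isCompact_singleton (singleton_subset_iff.2 hτ) n
  refine (integrable_inv_one_add_sq.const_mul C).integrableOn.mono'
    (hf.aestronglyMeasurable_mul_pow hτ n) ?_
  exact ae_restrict_of_forall_mem measurableSet_Ioi fun t ht ↦ hC τ rfl t (le_of_lt ht)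

lemma tendsto_mul_pow_atTop (hτ : 0 < τ.im) (n : ℕ) :
    Tendsto (fun t : ℝ ↦ f (τ + t * I) * (t : ℂ) ^ n) atTop (𝓝 0) := by
  simpa only [mul_comm, Pi.zero_apply] using (hf.tendsto n).tendsto_at hτ

end HolomorphicRapidDecay

section Periodic

variable {f : ℂ → ℂ} {h : ℝ}

lemma isBigO_exp_of_periodic_of_tendsto_zero (hh : 0 < h)
    (hd : DifferentiableOn ℂ f upperHalfPlaneSet) (hper : ∀ z : ℂ, 0 < z.im → f (z + h) = f z)
    (hzero : Tendsto f (comap im atTop) (𝓝 0)) :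
    f =O[comap im atTop] fun z ↦ Real.exp (-2 * π * z.im / h) := by
  have hmem : ∀ᶠ z in comap im atTop, z ∈ upperHalfPlaneSet :=
    tendsto_comap.eventually (eventually_gt_atTop 0)
  have heq : EqOn (indicator upperHalfPlaneSet f) f upperHalfPlaneSet :=
    fun z hz ↦ indicator_of_mem hz f
  have hper' : Function.Periodic (indicator upperHalfPlaneSet f) h := fun z ↦ by
    by_cases hz : z ∈ upperHalfPlaneSet
    · have hzh : z + h ∈ upperHalfPlaneSet := by simpa [upperHalfPlaneSet] using hz
      rw [heq hz, heq hzh, hper z hz]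
    · have hzh : z + h ∉ upperHalfPlaneSet := by simpa [upperHalfPlaneSet] using hz
      rw [indicator_of_notMem hz, indicator_of_notMem hzh]
  have hd' : ∀ᶠ z in comap im atTop, DifferentiableAt ℂ (indicator upperHalfPlaneSet f) z :=
    hmem.mono fun z hz ↦ (hd.congr heq).differentiableAt (isOpen_upperHalfPlaneSet.mem_nhds hz)
  have hzero' : Tendsto (indicator upperHalfPlaneSet f) (comap im atTop) (𝓝 0) :=
    hzero.congr' (hmem.mono fun z hz ↦ (heq hz).symm)
  exact (hper'.exp_decay_of_zero_at_inf hh hd' hzero').congr' (hmem.mono heq) .rfl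

lemma holomorphicRapidDecay_of_periodic (hh : 0 < h)
    (hd : DifferentiableOn ℂ f upperHalfPlaneSet) (hper : ∀ z : ℂ, 0 < z.im → f (z + h) = f z)
    (hzero : Tendsto f (comap im atTop) (𝓝 0)) : HolomorphicRapidDecay f where
  differentiableOn := hd
  tendsto n := by
    refine TendstoUniformlyOn.tendstoLocallyUniformlyOn (Metric.tendstoUniformlyOn_iff.2 ?_)
    intro ε hε
    obtain ⟨C, hC, hbound⟩ :=
      (isBigO_exp_of_periodic_of_tendsto_zero hh hd hper hzero).exists_pos
    obtain ⟨Y, hY⟩ := eventually_atTop.1 (eventually_comap.1 hbound.bound)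
    have hlim : Tendsto (fun t : ℝ ↦ C * (t ^ n * Real.exp (-(2 * π / h) * t))) atTop (𝓝 0) := by
      simpa using (tendsto_rpow_mul_exp_neg_mul_atTop_nhds_zero n (2 * π / h)
        (by positivity)).const_mul C
    filter_upwards [hlim.eventually_lt_const hε, eventually_ge_atTop Y, eventually_ge_atTop 0]
      with t hε ht ht0 z hz
    have hz : 0 < z.im := hz
    have him : (z + t * I).im = z.im + t := by simp
    have hfz : ‖f (z + t * I)‖ ≤ C * Real.exp (-(2 * π / h) * t) := by
      refine (hY (z.im + t) (by linarith) _ him).trans ?_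
      rw [Real.norm_of_nonneg (Real.exp_nonneg _), him, neg_mul, neg_mul, neg_div, neg_mul,
        mul_div_right_comm]
      gcongr
      exact le_add_of_nonneg_left hz.le
    rw [Pi.zero_apply, dist_zero_left, norm_mul, norm_pow, norm_real, Real.norm_of_nonneg ht0]
    calc t ^ n * ‖f (z + t * I)‖
        ≤ t ^ n * (C * Real.exp (-(2 * π / h) * t)) := by gcongr
      _ = C * (t ^ n * Real.exp (-(2 * π / h) * t)) := by ring
      _ < ε := hε

end Periodic

lemma IsCuspForm2k.holomorphicRapidDecay {k : ℕ} {f : ℂ → ℂ} (hf : IsCuspForm2k k f) :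
    HolomorphicRapidDecay f := by
  obtain ⟨hd, hmod, hzero⟩ := hf
  refine holomorphicRapidDecay_of_periodic one_pos
    (fun z hz ↦ (hd z hz).differentiableWithinAt) (fun z hz ↦ ?_) hzero
  simpa [moeb, jfac, ModularGroup.coe_T] using hmod ModularGroup.T z hz

end RapidDecay

section VerticalMoment

/-- The moment `J_{p,q}(τ) = ∫₀^∞ f(τ + it) t^p (t + 2v)^q dt`, which interpolates between the
holomorphic Eichler integral (`q = 0`) and the conjugate of the non-holomorphic one (`p = 0`). -/
def verticalMoment (f : ℂ → ℂ) (p q : ℕ) (τ : ℂ) : ℂ :=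
  ∫ t in Ioi (0 : ℝ), f (τ + t * I) * ((t : ℂ) ^ p * (t + 2 * τ.im) ^ q)

lemma verticalMoment_zero_right (f : ℂ → ℂ) (p : ℕ) (τ : ℂ) :
    verticalMoment f p 0 τ = ∫ t in Ioi (0 : ℝ), f (τ + t * I) * (t : ℂ) ^ p := by
  simp [verticalMoment]

lemma eichlerHol_eq_verticalMoment (m : ℕ) (f : ℂ → ℂ) :
    eichlerHol (m + 1) f = fun τ ↦ (2 * π : ℂ) ^ (2 * m + 1) / (2 * m).factorial *
      verticalMoment f (2 * m) 0 τ := by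
  funext τ
  have hconst : (2 * π : ℂ) ^ (2 * m + 1) = (-2 * π * I) ^ (2 * m + 1) * I ^ (2 * m + 1) := by
    rw [← mul_pow]
    congr 1
    linear_combination (2 * (π : ℂ)) * I_sq
  have hint : ∫ t in Ioi (0 : ℝ), f (τ + t * I) * (t * I) ^ (2 * m) * I =
      I ^ (2 * m + 1) * ∫ t in Ioi (0 : ℝ), f (τ + t * I) * (t : ℂ) ^ (2 * m) := by
    rw [← integral_const_mul]
    congr 1 with t
    ring
  rw [eichlerHol, verticalMoment_zero_right, hconst, show 2 * (m + 1) - 2 = 2 * m by omega,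
    show 2 * (m + 1) - 1 = 2 * m + 1 by omega, hint]
  ring

lemma eichlerStar_eq_conj_verticalMoment (m : ℕ) (f : ℂ → ℂ) :
    eichlerStar (m + 1) f = fun τ ↦ -(1 / 2 : ℂ) ^ (2 * m + 1) *
      starRingEnd ℂ (verticalMoment f 0 (2 * m) τ) := by
  funext τ
  have hconst : -(1 / 2 : ℂ) ^ (2 * m + 1) =
      (-2 * I) ^ (1 - 2 * ((m + 1 : ℕ) : ℤ)) * I ^ (2 * m + 1) := by
    rw [show 1 - 2 * ((m + 1 : ℕ) : ℤ) = -((2 * m + 1 : ℕ) : ℤ) by push_cast; ring, zpow_neg,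
      zpow_natCast, ← inv_pow, ← mul_pow, show (-2 * I)⁻¹ * I = -(1 / 2) by field_simp,
      Odd.neg_pow ⟨m, rfl⟩]
  have harg (t : ℝ) : -(starRingEnd ℂ (-(starRingEnd ℂ τ) + t * I)) = τ + t * I := by
    simp only [map_add, map_neg, map_mul, conj_conj, conj_ofReal, conj_I]
    ring
  have hbase (t : ℝ) : -(starRingEnd ℂ τ) + t * I + τ = I * (t + 2 * τ.im) := by
    rw [show (2 * τ.im : ℂ) = (2 * τ.im : ℝ) by simp]
    linear_combination sub_conj τ
  rw [eichlerStar, verticalMoment, hconst, ← integral_conj, mul_assoc]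
  congr 1
  rw [← integral_const_mul]
  congr 1 with t
  rw [harg, hbase, mul_pow, show 2 * (m + 1) - 2 = 2 * m by omega]
  simp only [map_mul, map_pow, map_add, conj_ofReal, conj_ofNat, pow_zero, one_mul]
  ring

namespace HolomorphicRapidDecay

variable {f : ℂ → ℂ} (hf : HolomorphicRapidDecay f) {τ : ℂ}
include hf

lemma hasDerivAt_verticalMoment_zero_right (hτ : 0 < τ.im) (p : ℕ) :
    HasDerivAt (verticalMoment f p 0) (verticalMoment (deriv f) p 0 τ) τ := by
  obtain ⟨K, hK, hKH, hKc⟩ := local_compact_nhds (isOpen_upperHalfPlaneSet.mem_nhds hτ)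
  obtain ⟨C, hC⟩ := hf.deriv.exists_norm_mul_pow_le hKc hKH p
  simp only [funext (verticalMoment_zero_right f p), verticalMoment_zero_right]
  refine (hasDerivAt_integral_of_dominated_loc_of_deriv_le
    (F := fun z (t : ℝ) ↦ f (z + t * I) * (t : ℂ) ^ p)
    (F' := fun z (t : ℝ) ↦ deriv f (z + t * I) * (t : ℂ) ^ p) hK ?_ (hf.integrableOn_mul_pow hτ p)
    (hf.deriv.aestronglyMeasurable_mul_pow hτ p) ?_
    (integrable_inv_one_add_sq.const_mul C).integrableOn ?_).2
  · exact eventually_of_mem hK fun z hz ↦ hf.aestronglyMeasurable_mul_pow (hKH hz) p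
  · exact ae_restrict_of_forall_mem measurableSet_Ioi fun t ht z hz ↦ hC z hz t (le_of_lt ht)
  · refine ae_restrict_of_forall_mem measurableSet_Ioi fun t ht z hz ↦ ?_
    have hpos := add_mul_I_mem_upperHalfPlaneSet (hKH hz) (le_of_lt ht)
    exact ((hf.hasDerivAt hpos).comp_add_const z (t * I)).mul_const _

lemma verticalMoment_deriv_succ (hτ : 0 < τ.im) (p : ℕ) :
    verticalMoment (deriv f) (p + 1) 0 τ = I * (p + 1) * verticalMoment f p 0 τ := by
  have hf' (t : ℝ) (ht : 0 ≤ t) :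
      HasDerivAt (fun t : ℝ ↦ f (τ + t * I)) (deriv f (τ + t * I) * I) t := by
    have hline : HasDerivAt (fun t : ℝ ↦ τ + t * I) I t := by
      simpa using (ofRealCLM.hasDerivAt.mul_const I).const_add τ
    exact (hf.hasDerivAt (add_mul_I_mem_upperHalfPlaneSet hτ ht)).comp t hline
  have hpow (t : ℝ) : HasDerivAt (fun t : ℝ ↦ (t : ℂ) ^ (p + 1)) ((p + 1) * (t : ℂ) ^ p) t := by
    simpa using (hasDerivAt_pow (p + 1) (t : ℂ)).comp_ofReal
  have hint := (hf.deriv.integrableOn_mul_pow hτ (p + 1)).const_mul I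
  have hint' := (hf.integrableOn_mul_pow hτ p).const_mul (p + 1 : ℂ)
  have hFTC := integral_Ioi_of_hasDerivAt_of_tendsto'
    (fun t ht ↦ ((hf' t ht).fun_mul (hpow t)).congr_deriv
      (by simp only [Pi.add_apply]; ring)) (hint.add hint')
    (hf.tendsto_mul_pow_atTop hτ (p + 1))
  have hparts : I * verticalMoment (deriv f) (p + 1) 0 τ +
      (p + 1) * verticalMoment f p 0 τ = 0 := by
    simpa [verticalMoment_zero_right, integral_add hint hint', integral_const_mul] using hFTC
  linear_combination -I * hparts + verticalMoment (deriv f) (p + 1) 0 τ * I_sq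

lemma integrableOn_verticalMoment (hτ : 0 < τ.im) (p q : ℕ) :
    IntegrableOn (fun t : ℝ ↦ f (τ + t * I) * ((t : ℂ) ^ p * (t + 2 * τ.im) ^ q)) (Ioi 0) := by
  induction q generalizing p with
  | zero => simpa using hf.integrableOn_mul_pow hτ p
  | succ q ih =>
    refine ((ih (p + 1)).add ((ih p).const_mul (2 * τ.im : ℂ))).congr (.of_forall fun t ↦ ?_)
    simp only [Pi.add_apply]
    ring

lemma verticalMoment_succ_right (hτ : 0 < τ.im) (p q : ℕ) :
    verticalMoment f p (q + 1) τ =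
      verticalMoment f (p + 1) q τ + 2 * (τ.im * verticalMoment f p q τ) := by
  simp only [verticalMoment]
  rw [← mul_assoc, ← integral_const_mul,
    ← integral_add (hf.integrableOn_verticalMoment hτ (p + 1) q)
      ((hf.integrableOn_verticalMoment hτ p q).const_mul _)]
  congr 1
  funext t
  ring

lemma hasDtauAt_verticalMoment_succ_left (hτ : 0 < τ.im) (p q : ℕ) :
    HasDtauAt (verticalMoment f (p + 1) q) (I * (p + 1) * verticalMoment f p q τ) τ := by
  induction q generalizing p with
  | zero =>
    rw [← hf.verticalMoment_deriv_succ hτ p]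
    exact hasDtauAt_of_hasDerivAt (hf.hasDerivAt_verticalMoment_zero_right hτ (p + 1))
  | succ q ih =>
    have hrec : verticalMoment f (p + 1) (q + 1) =ᶠ[𝓝 τ] fun z ↦
        verticalMoment f (p + 1 + 1) q z + 2 * (z.im * verticalMoment f (p + 1) q z) :=
      eventually_of_mem (isOpen_upperHalfPlaneSet.mem_nhds hτ)
        fun z hz ↦ hf.verticalMoment_succ_right hz (p + 1) q
    convert ((ih (p + 1)).add (((hasDtauAt_im τ).mul (ih p)).const_mul 2)).congr_of_eventuallyEq
      hrec using 1
    rw [hf.verticalMoment_succ_right hτ]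
    push_cast
    ring

lemma hasDtauAt_conj_verticalMoment_succ_right (hτ : 0 < τ.im) (p q : ℕ) :
    HasDtauAt (fun z ↦ starRingEnd ℂ (verticalMoment f p (q + 1) z))
      (-I * (q + 1) * starRingEnd ℂ (verticalMoment f p q τ)) τ := by
  have hrec (p q : ℕ) : (fun z ↦ starRingEnd ℂ (verticalMoment f p (q + 1) z)) =ᶠ[𝓝 τ] fun z ↦
      starRingEnd ℂ (verticalMoment f (p + 1) q z) +
        2 * (z.im * starRingEnd ℂ (verticalMoment f p q z)) :=
    eventually_of_mem (isOpen_upperHalfPlaneSet.mem_nhds hτ) fun z hz ↦ by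
      simp [hf.verticalMoment_succ_right hz p q, conj_ofNat]
  have hbase (p : ℕ) : HasDtauAt (fun z ↦ starRingEnd ℂ (verticalMoment f p 0 z)) 0 τ :=
    hasDtauAt_conj_of_hasDerivAt (hf.hasDerivAt_verticalMoment_zero_right hτ p)
  induction q generalizing p with
  | zero =>
    convert ((hbase (p + 1)).add (((hasDtauAt_im τ).mul (hbase p)).const_mul
      2)).congr_of_eventuallyEq (hrec p 0) using 1
    push_cast
    ring
  | succ q ih =>
    convert ((ih (p + 1)).add (((hasDtauAt_im τ).mul (ih p)).const_mul 2)).congr_of_eventuallyEq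
      (hrec p (q + 1)) using 1
    rw [(hrec p q).eq_of_nhds]
    push_cast
    ring

lemma isRaisingLadder_verticalMoment : IsRaisingLadder (verticalMoment f) where
  differentiableAt p r _ hτ := (hf.hasDtauAt_verticalMoment_succ_left hτ p r).differentiableAt
  raiseOp_eq p r τ hτ := by
    have hv : (τ.im : ℂ) ≠ 0 := ofReal_ne_zero.2 hτ.ne'
    rw [raiseOp, (hf.hasDtauAt_verticalMoment_succ_left hτ p r).dtau,
      hf.verticalMoment_succ_right hτ]
    push_cast
    linear_combination
      2 * (p + 1) * verticalMoment f p r τ * (I_sq + inv_mul_cancel₀ hv)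

lemma isRaisingLadder_conj_verticalMoment :
    IsRaisingLadder fun p r τ ↦ starRingEnd ℂ (verticalMoment f r p τ) where
  differentiableAt p r _ hτ :=
    (hf.hasDtauAt_conj_verticalMoment_succ_right hτ r p).differentiableAt
  raiseOp_eq p r τ hτ := by
    have hv : (τ.im : ℂ) ≠ 0 := ofReal_ne_zero.2 hτ.ne'
    rw [raiseOp, (hf.hasDtauAt_conj_verticalMoment_succ_right hτ r p).dtau,
      hf.verticalMoment_succ_right hτ]
    simp only [map_add, map_mul, conj_ofReal, conj_ofNat]
    push_cast
    linear_combination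
      -2 * (p + 1) * starRingEnd ℂ (verticalMoment f r p τ) * (I_sq + inv_mul_cancel₀ hv)

lemma raiseIter_eichlerHol (m : ℕ) (hτ : 0 < τ.im) :
    raiseIter (-(2 * m : ℕ)) m (eichlerHol (m + 1) f) τ =
      (2 * π : ℂ) ^ (2 * m + 1) / (2 * m).factorial *
        ((-1) ^ m * (2 * m).descFactorial m *
          ((τ.im : ℂ) ^ (-m : ℤ) * verticalMoment f m m τ)) := by
  rw [eichlerHol_eq_verticalMoment, raiseIter_const_mul]
  beta_reduce
  rw [hf.isRaisingLadder_verticalMoment.raiseIter_eq (two_mul m).symm hτ]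

lemma raiseIter_eichlerStar (m : ℕ) (hτ : 0 < τ.im) :
    raiseIter (-(2 * m : ℕ)) m (eichlerStar (m + 1) f) τ =
      -(1 / 2 : ℂ) ^ (2 * m + 1) * ((-1) ^ m * (2 * m).descFactorial m *
        ((τ.im : ℂ) ^ (-m : ℤ) * starRingEnd ℂ (verticalMoment f m m τ))) := by
  rw [eichlerStar_eq_conj_verticalMoment, raiseIter_const_mul]
  beta_reduce
  rw [hf.isRaisingLadder_conj_verticalMoment.raiseIter_eq (two_mul m).symm hτ]

end HolomorphicRapidDecay

end VerticalMoment

theorem raised_eichler_relation_general (k : ℕ) (hk : 1 ≤ k) (f : ℂ → ℂ)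
    (hf : HolomorphicRapidDecay f) (τ : ℂ) (hτ : 0 < τ.im) :
    raiseIter (2 - 2 * k) (k - 1) (eichlerStar k f) τ =
      -((Nat.factorial (2 * k - 2) : ℂ) / (4 * (π : ℂ)) ^ (2 * k - 1)) *
        starRingEnd ℂ (raiseIter (2 - 2 * k) (k - 1) (eichlerHol k f) τ) := by
  obtain ⟨m, rfl⟩ : ∃ m, k = m + 1 := ⟨k - 1, by omega⟩
  have hweight : 2 - 2 * ((m + 1 : ℕ) : ℤ) = -(2 * m : ℕ) := by push_cast; ring
  have hconst : -(1 / 2 : ℂ) ^ (2 * m + 1) = -((2 * m).factorial / (4 * π) ^ (2 * m + 1)) *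
      ((2 * π) ^ (2 * m + 1) / (2 * m).factorial) := by
    have hfac : ((2 * m).factorial : ℂ) ≠ 0 := Nat.cast_ne_zero.2 (Nat.factorial_ne_zero _)
    rw [show (4 * π : ℂ) = 2 * (2 * π) by ring, mul_pow 2 (2 * π : ℂ), one_div, inv_pow]
    field_simp
  rw [hweight, add_tsub_cancel_right, show 2 * (m + 1) - 2 = 2 * m by omega,
    show 2 * (m + 1) - 1 = 2 * m + 1 by omega, hf.raiseIter_eichlerHol m hτ,
    hf.raiseIter_eichlerStar m hτ, hconst]
  simp only [map_mul, map_pow, map_div₀, map_neg, map_one, map_zpow₀, conj_ofReal, map_natCast,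
    conj_ofNat]
  ring

/-- relation between the raised non-holomorphic and holomorphic Eichler integrals
of a cusp form of weight `2k`. -/
theorem raised_eichler_relation (k : ℕ) (hk : 2 ≤ k) (f : ℂ → ℂ) (hf : IsCuspForm2k k f)
    (τ : ℂ) (hτ : 0 < τ.im) :
    raiseIter (2 - 2 * k) (k - 1) (eichlerStar k f) τ =
      -((Nat.factorial (2 * k - 2) : ℂ) / (4 * (π : ℂ)) ^ (2 * k - 1)) *
        starRingEnd ℂ (raiseIter (2 - 2 * k) (k - 1) (eichlerHol k f) τ) :=
  raised_eichler_relation_general k (by omega) f hf.holomorphicRapidDecay τ hτ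

end LHMF
end
end

section
/- Let k ≥ 2 and m ≥ 1 be integers. For all τ = u+iv ∈ ℍ one has R_{2−2k}^{k−1}( Γ(2k−1, 4πmv)·e^{−2πimτ} ) = (2k−2)! · conj( R_{2−2k}^{k−1}( e^{2πimτ} ) ), where both sides are viewed as smooth functions of τ ∈ ℍ and the iterated raising operator is applied in τ. -/
open Complex MeasureTheory
open scoped Real

noncomputable section

namespace LHMF

/-!
Both sides are `v ^ (1 - k)` times a polynomial in `v` times `exp (-2πim τ̄)`. On the right, raising
`exp (2πimτ)` produces the polynomials generated from `1` by the operators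
`v d/dv + (κ + j) - 4πm v`. On the left, integration by parts gives
`Γ(2k - 1, x) = (2k - 2)! e^{-x} ∑_{a ≤ 2k - 2} x ^ a / a!`, whose exponential turns
`exp (-2πimτ)` into the antiholomorphic `exp (-2πim τ̄)`. Raising therefore acts on the polynomial
by `v d/dv + (κ + j)`, which is diagonal on monomials. With `κ = 2 - 2k` the eigenvalues on `v ^ a`,
`k - 1 < a ≤ 2k - 2`, vanish, and the remaining coefficients agree by the factorization of
Pochhammer symbols.
-/

open Polynomial

section RaisePoly

variable {R : Type*} [CommRing R]

/-- The polynomial factor of an iterated raised function: if `2i ∂h/∂τ = d h`, then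
`R_κ^n (P(v) h) = v ^ (-n) Q(v) h` with `Q = raisePoly κ d P n`
(see `raiseIter_eval_im_mul`). -/
def raisePoly (κ d : R) (P : R[X]) : ℕ → R[X]
  | 0 => P
  | n + 1 => X * derivative (raisePoly κ d P n) + C (κ + n) * raisePoly κ d P n +
      C d * (X * raisePoly κ d P n)

lemma coeff_zero_raisePoly_succ (κ d : R) (P : R[X]) (n : ℕ) :
    (raisePoly κ d P (n + 1)).coeff 0 = (κ + n) * (raisePoly κ d P n).coeff 0 := by
  simp [raisePoly, mul_coeff_zero]

lemma coeff_succ_raisePoly_succ (κ d : R) (P : R[X]) (n a : ℕ) :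
    (raisePoly κ d P (n + 1)).coeff (a + 1) =
      (κ + n + (a + 1)) * (raisePoly κ d P n).coeff (a + 1) +
        d * (raisePoly κ d P n).coeff a := by
  simp only [raisePoly, coeff_add, coeff_X_mul, coeff_C_mul, coeff_derivative]
  ring

lemma coeff_raisePoly_of_eigenvalue_zero (κ : R) (P : R[X]) (n a : ℕ) :
    (raisePoly κ 0 P n).coeff a = (ascPochhammer R n).eval (κ + a) * P.coeff a := by
  induction n with
  | zero => simp [raisePoly]
  | succ n ih =>
    rw [ascPochhammer_succ_eval]
    cases a with
    | zero => rw [coeff_zero_raisePoly_succ, ih]; push_cast; ring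
    | succ a => rw [coeff_succ_raisePoly_succ, ih]; push_cast; ring

lemma choose_succ_mul_ascPochhammer_eval (κ : R) {n a : ℕ} (h : a ≤ n) :
    (κ + n + (a + 1)) * (n.choose (a + 1) * (ascPochhammer R (n - (a + 1))).eval (κ + (a + 1))) +
        n.choose a * (ascPochhammer R (n - a)).eval (κ + a) =
      (n + 1).choose (a + 1) * (ascPochhammer R (n - a)).eval (κ + (a + 1)) := by
  obtain ⟨b, rfl⟩ := Nat.exists_eq_add_of_le h
  rw [Nat.add_sub_cancel_left, Nat.sub_add_eq, Nat.add_sub_cancel_left, Nat.choose_succ_succ']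
  cases b with
  | zero => simp
  | succ b =>
    have eval_left : (ascPochhammer R (b + 1)).eval (κ + a) =
        (κ + a) * (ascPochhammer R b).eval (κ + (a + 1)) := by
      simp [ascPochhammer_succ_left, add_assoc]
    have choose_right : ((a + (b + 1)).choose (a + 1) : R) * (a + 1) =
        (a + (b + 1)).choose a * (b + 1) := by
      have := Nat.choose_succ_right_eq (a + (b + 1)) a
      rw [Nat.add_sub_cancel_left] at this
      exact_mod_cast congrArg (Nat.cast : ℕ → R) this
    rw [eval_left, ascPochhammer_succ_eval, Nat.add_sub_cancel]
    push_cast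
    linear_combination (ascPochhammer R b).eval (κ + (a + 1)) * choose_right

lemma coeff_raisePoly_one (κ d : R) (n a : ℕ) :
    (raisePoly κ d 1 n).coeff a =
      n.choose a * (ascPochhammer R (n - a)).eval (κ + a) * d ^ a := by
  induction n generalizing a with
  | zero => cases a <;> simp [raisePoly, coeff_one]
  | succ n ih =>
    cases a with
    | zero =>
      rw [coeff_zero_raisePoly_succ, ih]
      simp [ascPochhammer_succ_eval, mul_comm]
    | succ a =>
      rw [coeff_succ_raisePoly_succ, ih, ih]
      rcases le_or_gt a n with h | h
      · rw [Nat.add_sub_add_right, Nat.cast_succ, ← choose_succ_mul_ascPochhammer_eval κ h]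
        ring
      · simp [Nat.choose_eq_zero_of_lt, h, h.trans (Nat.lt_succ_self a)]

lemma ascPochhammer_eval_neg_two_mul_add (n : ℕ) {a : ℕ} (ha : a ≤ 2 * n) :
    (ascPochhammer R n).eval (-(2 * n) + a : R) =
      (-1) ^ a * a.factorial *
        (n.choose a * (ascPochhammer R (n - a)).eval (-(2 * n) + a : R)) := by
  rcases le_or_gt a n with h | h
  · have split := congrArg (eval (-(2 * n) + a : R)) (ascPochhammer_mul R (n - a) a)
    have shift : (-(2 * n) + a + (n - a) : R) = -n := by ring
    rw [Nat.sub_add_cancel h, eval_mul, eval_comp, eval_add, eval_X, eval_natCast,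
      Nat.cast_sub h, shift, ascPochhammer_eval_neg_eq_descPochhammer,
      descPochhammer_eval_eq_descFactorial, Nat.descFactorial_eq_factorial_mul_choose] at split
    rw [← split]
    push_cast
    ring
  · have vanish := ascPochhammer_eval_neg_coe_nat_of_lt (R := R) (show 2 * n - a < n by omega)
    rw [show (-(2 * n) + a : R) = -((2 * n - a : ℕ) : R) by push_cast [ha]; ring, vanish]
    simp [Nat.choose_eq_zero_of_lt h]

end RaisePoly

section ExpTrunc

variable {A : Type*} [CommRing A] [Algebra ℚ A]

variable (A) in
/-- The Taylor polynomial `∑_{a ≤ N} X ^ a / a!` of the exponential, of degree `N` (included). -/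
def expTrunc (N : ℕ) : A[X] := PowerSeries.trunc (N + 1) (PowerSeries.exp A)

lemma coeff_expTrunc (N a : ℕ) :
    (expTrunc A N).coeff a = if a ≤ N then algebraMap ℚ A (1 / a.factorial) else 0 := by
  simp [expTrunc, PowerSeries.coeff_trunc, PowerSeries.coeff_exp]

lemma factorial_mul_algebraMap_inv (a : ℕ) :
    (a.factorial : A) * algebraMap ℚ A (1 / a.factorial) = 1 := by
  rw [← map_natCast (algebraMap ℚ A), ← map_mul,
    mul_one_div_cancel (Nat.cast_ne_zero.2 a.factorial_ne_zero), map_one]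

lemma expTrunc_sub_derivative (N : ℕ) :
    expTrunc A N - derivative (expTrunc A N) = monomial N (algebraMap ℚ A (1 / N.factorial)) := by
  rw [expTrunc, ← PowerSeries.trunc_derivative, PowerSeries.derivative_exp,
    PowerSeries.trunc_succ, add_sub_cancel_left, PowerSeries.coeff_exp]

theorem raisePoly_expTrunc (n : ℕ) (c : A) :
    raisePoly (-(2 * n) : A) 0 ((expTrunc A (2 * n)).comp (C c * X)) n =
      raisePoly (-(2 * n) : A) (-c) 1 n := by
  ext a
  rw [coeff_raisePoly_of_eigenvalue_zero, coeff_raisePoly_one, comp_C_mul_X_coeff, coeff_expTrunc]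
  split_ifs with ha
  · rw [ascPochhammer_eval_neg_two_mul_add n ha, neg_pow c]
    linear_combination (-1) ^ a * (n.choose a * (ascPochhammer A (n - a)).eval (-(2 * n) + a : A)) *
      c ^ a * factorial_mul_algebraMap_inv (A := A) a
  · simp [Nat.choose_eq_zero_of_lt (show n < a by omega)]

end ExpTrunc

section IncompleteGamma

lemma hasDerivAt_neg_exp_neg_mul_expTrunc (N : ℕ) (x : ℝ) :
    HasDerivAt (fun t => -(N.factorial * (Real.exp (-t) * (expTrunc ℝ N).eval t)))
      (Real.exp (-x) * x ^ N) x := by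
  have ode := congrArg (fun P => (N.factorial : ℝ) * eval x P) (expTrunc_sub_derivative (A := ℝ) N)
  simp only [eval_sub, eval_monomial, ← mul_assoc, factorial_mul_algebraMap_inv, one_mul] at ode
  refine (((hasDerivAt_neg x).exp.fun_mul ((expTrunc ℝ N).hasDerivAt x)).const_mul
    (N.factorial : ℝ)).fun_neg.congr_deriv ?_
  rw [← ode]
  ring

lemma integrableOn_Ioi_exp_neg_mul_pow (N : ℕ) (x : ℝ) :
    IntegrableOn (fun t => Real.exp (-t) * t ^ N) (Set.Ioi x) :=
  integrable_of_isBigO_exp_neg one_half_pos (by fun_prop)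
    (by simpa using (Real.Gamma_integrand_isLittleO N).isBigO)

theorem GammaUpper_succ (N : ℕ) (x : ℝ) :
    GammaUpper (N + 1) x = N.factorial * (Real.exp (-x) * (expTrunc ℝ N).eval x) := by
  have decay : Filter.Tendsto
      (fun t => -(N.factorial * (Real.exp (-t) * (expTrunc ℝ N).eval t)))
      Filter.atTop (nhds 0) := by
    simpa [Real.exp_neg, div_eq_inv_mul] using
      ((expTrunc ℝ N).tendsto_div_exp_atTop.const_mul (N.factorial : ℝ)).neg
  rw [GammaUpper, Nat.add_sub_cancel,
    integral_Ioi_of_hasDerivAt_of_tendsto'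
      (fun t _ => hasDerivAt_neg_exp_neg_mul_expTrunc N t)
      (integrableOn_Ioi_exp_neg_mul_pow N x) decay,
    zero_sub, neg_neg]

lemma GammaUpper_mul_exp (N : ℕ) (x : ℝ) (w : ℂ) :
    (GammaUpper (N + 1) (4 * π * x * w.im) : ℂ) * exp (-(2 * π * I * x * w)) =
      ((((expTrunc ℝ N).comp (C (4 * π * x) * X)).eval w.im : ℝ) : ℂ) *
        (N.factorial * exp (-(2 * π * I * x) * starRingEnd ℂ w)) := by
  have sub_conj_eq : w - starRingEnd ℂ w = 2 * w.im * I := by simpa using sub_conj w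
  have exp_conj_split : exp (-(2 * π * I * x) * starRingEnd ℂ w) =
      exp (-(4 * π * x * w.im)) * exp (-(2 * π * I * x * w)) := by
    rw [← exp_add]
    congr 1
    linear_combination (2 * π * I * x) * sub_conj_eq + 4 * π * x * w.im * I_mul_I
  rw [GammaUpper_succ, exp_conj_split]
  simp only [eval_comp, eval_mul, eval_C, eval_X]
  push_cast
  ring

end IncompleteGamma

section Wirtinger

lemma dtau_congr {f g : ℂ → ℂ} {τ : ℂ} (h : f =ᶠ[nhds τ] g) : dtau f τ = dtau g τ := by
  rw [dtau, dtau, h.fderiv_eq]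

lemma dtau_eq_deriv {f : ℂ → ℂ} {τ : ℂ} (hf : DifferentiableAt ℂ f τ) :
    dtau f τ = deriv f τ := by
  rw [dtau, (hf.hasDerivAt.hasFDerivAt.restrictScalars ℝ).fderiv]
  simp only [ContinuousLinearMap.coe_restrictScalars', ContinuousLinearMap.toSpanSingleton_apply,
    smul_eq_mul]
  linear_combination (-deriv f τ / 2) * I_mul_I

lemma dtau_comp_conj {f : ℂ → ℂ} {τ : ℂ} (hf : DifferentiableAt ℂ f (starRingEnd ℂ τ)) :
    dtau (fun w => f (starRingEnd ℂ w)) τ = 0 := by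
  have hasFDeriv : HasFDerivAt (fun w => f (starRingEnd ℂ w)) _ τ :=
    (hf.hasDerivAt.hasFDerivAt.restrictScalars ℝ).comp τ conjCLE.toContinuousLinearMap.hasFDerivAt
  rw [dtau, hasFDeriv.fderiv]
  simp [← mul_assoc]

lemma dtau_ofReal_im_mul {g : ℝ → ℝ} {g' : ℝ} {h : ℂ → ℂ} {τ : ℂ} (hg : HasDerivAt g g' τ.im)
    (hh : DifferentiableAt ℝ h τ) :
    2 * I * dtau (fun w => (g w.im : ℂ) * h w) τ =
      g' * h τ + g τ.im * (2 * I * dtau h τ) := by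
  have hasFDeriv : HasFDerivAt (fun w => (g w.im : ℂ) * h w) _ τ :=
    (ofRealCLM.hasFDerivAt.comp τ (hg.comp_hasFDerivAt τ imCLM.hasFDerivAt)).mul hh.hasFDerivAt
  rw [dtau, hasFDeriv.fderiv, dtau]
  simp only [Function.comp_apply, ofRealCLM_apply, Complex.coe_smul,
    ContinuousLinearMap.comp_smulₛₗ, Real.ringHom_apply, add_apply, smul_apply, real_smul,
    ContinuousLinearMap.comp_apply, imCLM_apply, one_im, ofReal_zero, smul_zero, smul_eq_mul,
    mul_zero, add_zero, I_im, ofReal_one, mul_one]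
  linear_combination (-g' * h τ) * I_mul_I

end Wirtinger

section Raising

theorem raiseIter_eval_im_mul {κ : ℤ} {d : ℝ} {h : ℂ → ℂ}
    (hh : ∀ w : ℂ, w.im ≠ 0 → DifferentiableAt ℝ h w)
    (hd : ∀ w : ℂ, w.im ≠ 0 → 2 * I * dtau h w = d * h w) (P : ℝ[X]) (n : ℕ) {τ : ℂ}
    (hτ : τ.im ≠ 0) :
    raiseIter κ n (fun w => ((P.eval w.im : ℝ) : ℂ) * h w) τ =
      ((τ.im ^ (-n : ℤ) * (raisePoly (κ : ℝ) d P n).eval τ.im : ℝ) : ℂ) * h τ := by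
  induction n generalizing τ with
  | zero => simp [raiseIter, raisePoly]
  | succ n ih =>
    have ih_near : raiseIter κ n (fun w => ((P.eval w.im : ℝ) : ℂ) * h w) =ᶠ[nhds τ]
        fun w => ((w.im ^ (-n : ℤ) * (raisePoly (κ : ℝ) d P n).eval w.im : ℝ) : ℂ) * h w :=
      (continuous_im.continuousAt.eventually_ne hτ).mono fun w hw => ih hw
    have hasDeriv := (hasDerivAt_zpow (-n : ℤ) τ.im (.inl hτ)).fun_mul
      ((raisePoly (κ : ℝ) d P n).hasDerivAt τ.im)
    have zpow_pred : τ.im ^ (-n - 1 : ℤ) = τ.im ^ (-n : ℤ) * τ.im⁻¹ := zpow_sub_one₀ hτ _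
    simp only [raiseIter, raiseOp]
    rw [dtau_congr ih_near, dtau_ofReal_im_mul hasDeriv (hh τ hτ), hd τ hτ,
      ih hτ, Nat.cast_succ, neg_add', zpow_pred]
    have hτ' : (τ.im : ℂ) ≠ 0 := ofReal_ne_zero.2 hτ
    simp only [raisePoly, eval_add, eval_mul, eval_X, eval_C]
    push_cast
    field_simp
    ring

lemma raiseIter_exp (κ : ℤ) (n : ℕ) (x : ℝ) {τ : ℂ} (hτ : τ.im ≠ 0) :
    raiseIter κ n (fun w => exp (2 * π * I * x * w)) τ =
      ((τ.im ^ (-n : ℤ) * (raisePoly (κ : ℝ) (-(4 * π * x)) 1 n).eval τ.im : ℝ) : ℂ) *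
        exp (2 * π * I * x * τ) := by
  have hasDeriv (w : ℂ) : HasDerivAt (fun w => exp (2 * π * I * x * w))
      (exp (2 * π * I * x * w) * (2 * π * I * x)) w := by
    simpa using ((hasDerivAt_id w).const_mul (2 * π * I * x)).cexp
  have eigen (w : ℂ) : 2 * I * dtau (fun w => exp (2 * π * I * x * w)) w =
      (-(4 * π * x) : ℝ) * exp (2 * π * I * x * w) := by
    rw [dtau_eq_deriv (hasDeriv w).differentiableAt, (hasDeriv w).deriv]
    push_cast
    linear_combination (4 * π * x * exp (2 * π * I * x * w)) * I_mul_I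
  simpa using raiseIter_eval_im_mul (κ := κ)
    (fun w _ => (hasDeriv w).differentiableAt.restrictScalars ℝ) (fun w _ => eigen w) 1 n hτ

lemma raiseIter_eval_im_mul_comp_conj (κ : ℤ) (n : ℕ) (P : ℝ[X]) {f : ℂ → ℂ}
    (hf : Differentiable ℂ f) {τ : ℂ} (hτ : τ.im ≠ 0) :
    raiseIter κ n (fun w => ((P.eval w.im : ℝ) : ℂ) * f (starRingEnd ℂ w)) τ =
      ((τ.im ^ (-n : ℤ) * (raisePoly (κ : ℝ) 0 P n).eval τ.im : ℝ) : ℂ) *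
        f (starRingEnd ℂ τ) :=
  raiseIter_eval_im_mul (h := fun w => f (starRingEnd ℂ w))
    (fun w _ => ((hf _).restrictScalars ℝ).comp w conjCLE.differentiableAt)
    (fun w _ => by simp only [dtau_comp_conj (hf _), ofReal_zero, mul_zero, zero_mul]) P n hτ

end Raising

theorem raised_gamma_whittaker_general (k : ℕ) (hk : 1 ≤ k) (x : ℝ) (τ : ℂ) (hτ : τ.im ≠ 0) :
    raiseIter (2 - 2 * k) (k - 1)
        (fun w => (GammaUpper (2 * k - 1) (4 * π * x * w.im) : ℂ) *
          exp (-(2 * π * I * x * w))) τ =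
      (Nat.factorial (2 * k - 2) : ℂ) *
        starRingEnd ℂ (raiseIter (2 - 2 * k) (k - 1) (fun w => exp (2 * π * I * x * w)) τ) := by
  obtain ⟨n, rfl⟩ := Nat.exists_eq_add_of_le' hk
  have weight : ((2 - 2 * (n + 1 : ℕ) : ℤ) : ℝ) = -(2 * n) := by push_cast; ring
  have conj_exp : starRingEnd ℂ (exp (2 * π * I * x * τ)) =
      exp (-(2 * π * I * x) * starRingEnd ℂ τ) := by
    rw [← exp_conj]
    simp only [map_mul, map_ofNat, conj_ofReal, conj_I, mul_neg, neg_mul]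
  rw [show 2 * (n + 1) - 1 = 2 * n + 1 by omega, show 2 * (n + 1) - 2 = 2 * n by omega,
    Nat.add_sub_cancel]
  simp only [GammaUpper_mul_exp]
  rw [raiseIter_eval_im_mul_comp_conj _ n _
      (f := fun z => (2 * n).factorial * exp (-(2 * π * I * x) * z)) (by fun_prop) hτ,
    raiseIter_exp _ n x hτ, weight, raisePoly_expTrunc, map_mul, conj_ofReal, conj_exp]
  ring

/-- the raising identity for incomplete-Gamma Whittaker terms. -/
theorem raised_gamma_whittaker (k m : ℕ) (hk : 2 ≤ k) (hm : 1 ≤ m) (τ : ℂ) (hτ : 0 < τ.im) :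
    raiseIter (2 - 2 * k) (k - 1)
        (fun w => (GammaUpper (2 * k - 1) (4 * π * m * w.im) : ℂ) *
          Complex.exp (-(2 * (π : ℂ) * Complex.I * (m : ℂ) * w))) τ =
      (Nat.factorial (2 * k - 2) : ℂ) *
        starRingEnd ℂ
          (raiseIter (2 - 2 * k) (k - 1)
            (fun w => Complex.exp (2 * (π : ℂ) * Complex.I * (m : ℂ) * w)) τ) := by
  simpa using raised_gamma_whittaker_general k (by omega) m τ hτ.ne'

end LHMF
end
end

section
/- Let k ≥ 2 and 0 < n < 2k−2 be integers. The local polynomial P_{1−k,n} is invariant under the weight 2−2k action of T = (1,1;0,1); that is, for every τ ∈ ℍ∖E₁ one has P_{1−k,n}(τ+1) = P_{1−k,n}(τ) (note τ+1 ∈ ℍ∖E₁ as well, since E₁ is SL₂(ℤ)-invariant). -/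
open Complex MeasureTheory
open scoped Real

noncomputable section

namespace LHMF

/-!
The first column of a matrix is unchanged by right multiplication by `T`, so the condition `ac > 0`
is unchanged too. Since `MT` sends `τ` where `M` sends `τ + 1`, with the same automorphy factor, the
substitution `M ↦ MT` carries the sum defining `P_{1-k,n}(τ + 1)` to the one defining
`P_{1-k,n}(τ)`, term by term.
-/

lemma jfac_mul (M : SL2Z) {N : SL2Z} {τ : ℂ} (hN : jfac N τ ≠ 0) :
    jfac (M * N) τ = jfac M (moeb N τ) * jfac N τ := by
  unfold jfac at hN
  simp only [jfac, moeb, Matrix.SpecialLinearGroup.coe_mul, Matrix.mul_apply, Fin.sum_univ_two,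
    Int.cast_add, Int.cast_mul]
  field_simp
  ring

lemma moeb_mul (M : SL2Z) {N : SL2Z} {τ : ℂ} (hN : jfac N τ ≠ 0) :
    moeb (M * N) τ = moeb M (moeb N τ) := by
  have numerator : ((M * N).1 0 0 : ℂ) * τ + ((M * N).1 0 1 : ℂ) =
      ((M.1 0 0 : ℂ) * moeb N τ + (M.1 0 1 : ℂ)) * jfac N τ := by
    unfold jfac at hN
    simp only [jfac, moeb, Matrix.SpecialLinearGroup.coe_mul, Matrix.mul_apply, Fin.sum_univ_two,
      Int.cast_add, Int.cast_mul]
    field_simp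
    ring
  calc moeb (M * N) τ
      = ((M.1 0 0 : ℂ) * moeb N τ + (M.1 0 1 : ℂ)) * jfac N τ /
          (jfac M (moeb N τ) * jfac N τ) := by
        rw [← numerator, ← jfac_mul M hN]; rfl
    _ = moeb M (moeb N τ) := mul_div_mul_right _ _ hN

lemma jfac_T (τ : ℂ) : jfac ModularGroup.T τ = 1 := by
  simp [jfac, ModularGroup.coe_T]

lemma moeb_T (τ : ℂ) : moeb ModularGroup.T τ = τ + 1 := by
  simp [moeb, ModularGroup.coe_T]

lemma jfac_mul_T (M : SL2Z) (τ : ℂ) : jfac (M * ModularGroup.T) τ = jfac M (τ + 1) := by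
  rw [jfac_mul M (by simp [jfac_T]), jfac_T, moeb_T, mul_one]

lemma moeb_mul_T (M : SL2Z) (τ : ℂ) : moeb (M * ModularGroup.T) τ = moeb M (τ + 1) := by
  rw [moeb_mul M (by simp [jfac_T]), moeb_T]

lemma mul_T_apply_zero (M : SL2Z) (i : Fin 2) : (M * ModularGroup.T).1 i 0 = M.1 i 0 := by
  simp [Matrix.mul_apply, ModularGroup.coe_T]

lemma periodic_bernPer (m : ℕ) : Function.Periodic (bernPer m) 1 := by
  intro τ
  simp only [bernPer, add_re, one_re, Int.floor_add_one, Int.cast_add, Int.cast_one,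
    add_sub_add_right_eq_sub]

lemma periodic_tsum_jfac_moeb {α : Type*} [AddCommMonoid α] [TopologicalSpace α]
    (f : ℂ → ℂ → α) :
    Function.Periodic
      (fun τ => ∑' M : {M : SL2Z // 0 < M.1 0 0 * M.1 1 0 ∧ (moeb M τ).re < 0},
        f (jfac M.1 τ) (moeb M.1 τ)) 1 := by
  intro τ
  let mulT : {M : SL2Z // 0 < M.1 0 0 * M.1 1 0 ∧ (moeb M (τ + 1)).re < 0} ≃
      {M : SL2Z // 0 < M.1 0 0 * M.1 1 0 ∧ (moeb M τ).re < 0} :=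
    (Equiv.mulRight ModularGroup.T).subtypeEquiv fun M => by
      rw [Equiv.coe_mulRight, mul_T_apply_zero, mul_T_apply_zero, moeb_mul_T]
  calc ∑' M : {M : SL2Z // 0 < M.1 0 0 * M.1 1 0 ∧ (moeb M (τ + 1)).re < 0},
        f (jfac M.1 (τ + 1)) (moeb M.1 (τ + 1))
      = ∑' M, f (jfac (mulT M).1 τ) (moeb (mulT M).1 τ) :=
        tsum_congr fun M => by rw [← jfac_mul_T, ← moeb_mul_T]; rfl
    _ = _ := mulT.tsum_eq fun M => f (jfac M.1 τ) (moeb M.1 τ)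

theorem Ppoly_T_invariant_general (k n : ℕ) : Function.Periodic (Ppoly k n) 1 := by
  intro τ
  have tsum_add_one := periodic_tsum_jfac_moeb
    (fun j z => j ^ (2 * k - 2) * (z ^ n - (-1 : ℂ) ^ n * z ^ (2 * k - 2 - n))) τ
  simp only [Ppoly, periodic_bernPer _ τ, tsum_add_one]

/-- the local polynomial `P_{1-k,n}` is invariant under `τ ↦ τ + 1`. -/
theorem Ppoly_T_invariant (k n : ℕ) (hk : 2 ≤ k) (hn0 : 0 < n) (hn1 : n < 2 * k - 2)
    (τ : ℂ) (hτ : 0 < τ.im) (hτE : τ ∉ E1) :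
    Ppoly k n (τ + 1) = Ppoly k n τ :=
  Ppoly_T_invariant_general k n τ

end LHMF
end
end

section
/- Let k ≥ 2 be an integer and let τ ∈ ℂ with 0 < Re τ < 1. Then ∫₀^∞ Σ_{m∈ℤ} y^{2k−2} (iy − τ + m)^{−2k} dy = (2^{2k−1} π / ((2i)^{2k−2} (2k−1))) · (1 − e^{2πiτ})^{−1}. -/
open Complex MeasureTheory
open scoped Real

noncomputable section

namespace LHMF

/-!
Differentiating the expansion `π cot (π z) = ∑ 1 / (z + m)` gives
`∑ (z + m)⁻ⁿ⁻² = (-1)ⁿ⁺¹ / (n + 1)! · (π cot (π ·))⁽ⁿ⁺¹⁾ z`, first on the upper half plane and then,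
by the identity theorem, on the connected set `ℂ \ ℤ`. As `Im z → ∞`, the function
`π cot (π z) + π i = 2πi q / (q - 1)`, `q = exp (2πiz)`, is exponentially small, and by Cauchy's
estimate so are its derivatives. Hence one can integrate `yⁿ (π cot (π ·))⁽ⁿ⁺¹⁾` by parts along the
ray `-τ + iy`, which moves all derivatives onto `yⁿ` and leaves a multiple of
`π cot (-πτ) + π i = 2πi / (1 - exp (2πiτ))`.
-/

section VerticalRay

open Filter Asymptotics Set
open scoped Nat Topology

variable {E : Type*} [NormedAddCommGroup E] [NormedSpace ℂ E] {f g : ℂ → E} {a : ℝ} {c : E} {z : ℂ}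

/-- Cauchy's estimate on unit circles: they change the imaginary part by at most `1`, which costs
the decay only the constant factor `exp |a|`. -/
lemma deriv_isBigO_exp_neg_mul_im (hdiff : ∀ᶠ w in comap im atTop, DifferentiableAt ℂ f w)
    (hf : f =O[comap im atTop] fun w ↦ Real.exp (-a * w.im)) :
    deriv f =O[comap im atTop] fun w ↦ Real.exp (-a * w.im) := by
  obtain ⟨C, hC, hbound⟩ := hf.exists_nonneg
  obtain ⟨A, -, hA⟩ := (atTop_basis.comap im).eventually_iff.mp (hdiff.and hbound.bound)
  refine .of_bound (C * Real.exp |a|) ?_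
  filter_upwards [preimage_mem_comap (Ici_mem_atTop (A + 1))] with w hw
  have abs_im_sub_le {v : ℂ} (hv : v ∈ Metric.closedBall w 1) : |v.im - w.im| ≤ 1 :=
    (abs_im_le_norm (v - w)).trans (mem_closedBall_iff_norm.mp hv)
  have im_ge {v : ℂ} (hv : v ∈ Metric.closedBall w 1) : A ≤ v.im := by
    linarith [neg_le_of_abs_le (abs_im_sub_le hv), show A + 1 ≤ w.im from hw]
  have hdiffcont : DiffContOnCl ℂ f (Metric.ball w 1) :=
    DifferentiableOn.diffContOnCl_ball (U := Metric.closedBall w 1)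
      (fun v hv ↦ (hA (im_ge hv)).1.differentiableWithinAt) subset_rfl
  refine (norm_deriv_le_of_forall_mem_sphere_norm_le one_pos hdiffcont fun v hv ↦ ?_).trans_eq
    (div_one _)
  replace hv := Metric.sphere_subset_closedBall hv
  calc ‖f v‖ ≤ C * ‖Real.exp (-a * v.im)‖ := (hA (im_ge hv)).2
    _ ≤ C * (Real.exp |a| * Real.exp (-a * w.im)) := by
        rw [Real.norm_of_nonneg (Real.exp_pos _).le, ← Real.exp_add]
        gcongr
        have : -a * (v.im - w.im) ≤ |a| * 1 := (le_abs_self _).trans <| by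
          rw [abs_mul, abs_neg]
          gcongr
          exact abs_im_sub_le hv
        linarith
    _ = C * Real.exp |a| * ‖Real.exp (-a * w.im)‖ := by
        rw [Real.norm_of_nonneg (Real.exp_pos _).le, mul_assoc]

lemma pow_smul_vertical_isBigO_exp_neg (ha : 0 < a)
    (hg : g =O[comap im atTop] fun w ↦ Real.exp (-a * w.im)) (z : ℂ) (n : ℕ) :
    (fun y : ℝ ↦ (y : ℂ) ^ n • g (z + y * I)) =O[atTop] fun y ↦ Real.exp (-(a / 2) * y) := by
  have hpow : (fun y : ℝ ↦ (y : ℂ) ^ n) =O[atTop] fun y ↦ Real.exp (a / 2 * y) :=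
    .trans (.of_norm_eventuallyLE (.of_forall fun y ↦ by simp))
      (isLittleO_pow_exp_pos_mul_atTop n (half_pos ha)).isBigO.norm_left
  have hline : Tendsto (fun y : ℝ ↦ z + y * I) atTop (comap im atTop) :=
    tendsto_comap_iff.mpr <| by
      simpa [Function.comp_def] using tendsto_atTop_add_const_left _ z.im tendsto_id
  refine (hpow.smul (hg.comp_tendsto hline)).trans <|
    (isBigO_const_mul_self (Real.exp (-a * z.im)) _ _).congr_left fun y ↦ ?_
  have him : (z + y * I).im = z.im + y := by simp
  simp only [Function.comp_apply, smul_eq_mul, ← Real.exp_add, him]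
  congr 1
  ring

lemma tendsto_pow_smul_vertical_zero (ha : 0 < a)
    (hg : g =O[comap im atTop] fun w ↦ Real.exp (-a * w.im)) (z : ℂ) (n : ℕ) :
    Tendsto (fun y : ℝ ↦ (y : ℂ) ^ n • g (z + y * I)) atTop (𝓝 0) :=
  (pow_smul_vertical_isBigO_exp_neg ha hg z n).trans_tendsto <|
    Real.tendsto_exp_atBot.comp <| tendsto_id.const_mul_atTop_of_neg (by linarith)

variable [CompleteSpace E]

lemma analyticAt_iteratedDeriv (hf : AnalyticAt ℂ f z) (n : ℕ) :
    AnalyticAt ℂ (iteratedDeriv n f) z :=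
  iteratedDeriv_eq_iterate (n := n) (f := f) ▸ hf.iterated_deriv n

lemma iteratedDeriv_succ_isBigO_exp_neg_mul_im
    (hanalytic : ∀ᶠ w in comap im atTop, AnalyticAt ℂ f w)
    (hf : (f · - c) =O[comap im atTop] fun w ↦ Real.exp (-a * w.im)) (n : ℕ) :
    iteratedDeriv (n + 1) f =O[comap im atTop] fun w ↦ Real.exp (-a * w.im) := by
  induction n with
  | zero =>
    have h := deriv_isBigO_exp_neg_mul_im
      (hanalytic.mono fun w hw ↦ (hw.sub analyticAt_const).differentiableAt) hf
    rwa [zero_add, iteratedDeriv_one, ← funext fun w ↦ deriv_sub_const (f := f) (x := w) c]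
  | succ n ih =>
    rw [iteratedDeriv_succ]
    exact deriv_isBigO_exp_neg_mul_im
      (hanalytic.mono fun w hw ↦ (analyticAt_iteratedDeriv hw _).differentiableAt) ih

lemma hasDerivAt_iteratedDeriv_vertical {y : ℝ} (hf : AnalyticAt ℂ f (z + y * I)) (n : ℕ) :
    HasDerivAt (fun t : ℝ ↦ iteratedDeriv n f (z + t * I))
      (I • iteratedDeriv (n + 1) f (z + y * I)) y := by
  have hline : HasDerivAt (fun t : ℝ ↦ z + t * I) I y := by
    simpa using ((hasDerivAt_id y).ofReal_comp.mul_const I).const_add z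
  rw [iteratedDeriv_succ]
  exact (analyticAt_iteratedDeriv hf n).differentiableAt.hasDerivAt.scomp y hline

lemma integrableOn_Ioi_pow_smul_iteratedDeriv_vertical (ha : 0 < a)
    (hray : ∀ y : ℝ, 0 ≤ y → AnalyticAt ℂ f (z + y * I))
    (hanalytic : ∀ᶠ w in comap im atTop, AnalyticAt ℂ f w)
    (hf : (f · - c) =O[comap im atTop] fun w ↦ Real.exp (-a * w.im)) (m n : ℕ) :
    IntegrableOn (fun y : ℝ ↦ (y : ℂ) ^ m • iteratedDeriv (n + 1) f (z + y * I)) (Ioi 0) := by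
  have hcont : ContinuousOn (fun y : ℝ ↦ (y : ℂ) ^ m • iteratedDeriv (n + 1) f (z + y * I))
      (Ici 0) := fun y hy ↦ ContinuousAt.continuousWithinAt <|
    (continuous_ofReal.pow m).continuousAt.smul
      (hasDerivAt_iteratedDeriv_vertical (hray y hy) (n + 1)).continuousAt
  have hdecay := pow_smul_vertical_isBigO_exp_neg ha
    (iteratedDeriv_succ_isBigO_exp_neg_mul_im hanalytic hf n) z m
  exact ((hcont.locallyIntegrableOn measurableSet_Ici).integrableOn_of_isBigO_atTop hdecay
    ⟨Ioi 0, Ioi_mem_atTop 0, exp_neg_integrableOn_Ioi 0 (half_pos ha)⟩).mono_set Ioi_subset_Ici_self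

lemma integral_Ioi_iteratedDeriv_one_vertical (ha : 0 < a)
    (hray : ∀ y : ℝ, 0 ≤ y → AnalyticAt ℂ f (z + y * I))
    (hanalytic : ∀ᶠ w in comap im atTop, AnalyticAt ℂ f w)
    (hf : (f · - c) =O[comap im atTop] fun w ↦ Real.exp (-a * w.im)) :
    ∫ y : ℝ in Ioi 0, iteratedDeriv 1 f (z + y * I) = I • (f z - c) := by
  have hlim : Tendsto (fun y : ℝ ↦ f (z + y * I) - c) atTop (𝓝 0) := by
    simpa using tendsto_pow_smul_vertical_zero ha hf z 0
  have hderiv (y : ℝ) (hy : y ∈ Ici 0) : HasDerivAt (fun t : ℝ ↦ f (z + t * I) - c)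
      (I • iteratedDeriv 1 f (z + y * I)) y := by
    simpa using! (hasDerivAt_iteratedDeriv_vertical (hray y hy) 0).sub_const c
  have hint : IntegrableOn (fun y : ℝ ↦ iteratedDeriv 1 f (z + y * I)) (Ioi 0) := by
    simpa using integrableOn_Ioi_pow_smul_iteratedDeriv_vertical ha hray hanalytic hf 0 0
  have hftc := integral_Ioi_of_hasDerivAt_of_tendsto' hderiv (hint.smul I) hlim
  rw [integral_smul] at hftc
  apply smul_right_injective E I_ne_zero
  simp only [hftc, smul_smul, I_mul_I, ofReal_zero, zero_mul, add_zero, zero_sub, neg_one_smul]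

lemma integral_Ioi_pow_succ_smul_iteratedDeriv_vertical (ha : 0 < a)
    (hray : ∀ y : ℝ, 0 ≤ y → AnalyticAt ℂ f (z + y * I))
    (hanalytic : ∀ᶠ w in comap im atTop, AnalyticAt ℂ f w)
    (hf : (f · - c) =O[comap im atTop] fun w ↦ Real.exp (-a * w.im)) (m n : ℕ) :
    ∫ y : ℝ in Ioi 0, (y : ℂ) ^ (m + 1) • iteratedDeriv (n + 2) f (z + y * I) =
      ((m + 1) * I) • ∫ y : ℝ in Ioi 0, (y : ℂ) ^ m • iteratedDeriv (n + 1) f (z + y * I) := by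
  have hint := integrableOn_Ioi_pow_smul_iteratedDeriv_vertical ha hray hanalytic hf
  have hlim := tendsto_pow_smul_vertical_zero ha
    (iteratedDeriv_succ_isBigO_exp_neg_mul_im hanalytic hf n) z (m + 1)
  have hderiv (y : ℝ) (hy : y ∈ Ici 0) :
      HasDerivAt (fun t : ℝ ↦ (t : ℂ) ^ (m + 1) • iteratedDeriv (n + 1) f (z + t * I))
        (I • (y : ℂ) ^ (m + 1) • iteratedDeriv (n + 2) f (z + y * I) +
          (m + 1 : ℂ) • (y : ℂ) ^ m • iteratedDeriv (n + 1) f (z + y * I)) y := by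
    have hpow : HasDerivAt (fun t : ℝ ↦ (t : ℂ) ^ (m + 1)) ((m + 1) * (y : ℂ) ^ m) y := by
      simpa using! (hasDerivAt_id y).ofReal_comp.pow (m + 1)
    convert! hpow.smul (hasDerivAt_iteratedDeriv_vertical (hray y hy) (n + 1)) using 1
    module
  have hint_smul_deriv : IntegrableOn
      (fun y : ℝ ↦ I • (y : ℂ) ^ (m + 1) • iteratedDeriv (n + 2) f (z + y * I)) (Ioi 0) :=
    (hint (m + 1) (n + 1)).smul I
  have hint_deriv_smul : IntegrableOn
      (fun y : ℝ ↦ (m + 1 : ℂ) • (y : ℂ) ^ m • iteratedDeriv (n + 1) f (z + y * I)) (Ioi 0) :=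
    (hint m n).smul (m + 1 : ℂ)
  have hftc := integral_Ioi_of_hasDerivAt_of_tendsto' hderiv
    (hint_smul_deriv.add hint_deriv_smul) hlim
  rw [integral_add hint_smul_deriv hint_deriv_smul, integral_smul, integral_smul, ofReal_zero,
    zero_pow m.succ_ne_zero, zero_smul, sub_zero] at hftc
  apply smul_right_injective E I_ne_zero
  simp only [eq_neg_of_add_eq_zero_left hftc, smul_smul]
  rw [mul_left_comm, I_mul_I, mul_neg_one, neg_smul]

theorem integral_Ioi_pow_smul_iteratedDeriv_vertical (ha : 0 < a)
    (hray : ∀ y : ℝ, 0 ≤ y → AnalyticAt ℂ f (z + y * I))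
    (hanalytic : ∀ᶠ w in comap im atTop, AnalyticAt ℂ f w)
    (hf : (f · - c) =O[comap im atTop] fun w ↦ Real.exp (-a * w.im)) (n : ℕ) :
    ∫ y : ℝ in Ioi 0, (y : ℂ) ^ n • iteratedDeriv (n + 1) f (z + y * I) =
      (n ! * I ^ (n + 1)) • (f z - c) := by
  induction n with
  | zero => simpa using integral_Ioi_iteratedDeriv_one_vertical ha hray hanalytic hf
  | succ n ih =>
    rw [integral_Ioi_pow_succ_smul_iteratedDeriv_vertical ha hray hanalytic hf, ih, smul_smul,
      Nat.factorial_succ]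
    congr 1
    push_cast
    ring

end VerticalRay

section Cotangent

open Filter Asymptotics Set
open scoped Nat Topology

variable {z τ : ℂ}

lemma isPreconnected_integerComplement : IsPreconnected integerComplement :=
  ((countable_range ((↑) : ℤ → ℂ)).isConnected_compl_of_one_lt_rank
    (by simp [rank_real_complex])).isPreconnected

lemma mem_integerComplement_of_re_mem_Ioo {m : ℤ} (hz : z.re ∈ Ioo (m : ℝ) (m + 1)) :
    z ∈ integerComplement := by
  rintro ⟨l, rfl⟩
  rw [intCast_re] at hz
  have hml : m < l := Int.cast_lt.mp hz.1
  have hlm : l < m + 1 := by exact_mod_cast hz.2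
  lia

lemma exists_ball_norm_add_intCast_le (hz : z ∈ integerComplement) :
    ∃ r > 0, ∀ w ∈ Metric.ball z r, ∀ m : ℤ, ‖z + m‖ ≤ 2 * ‖w + m‖ := by
  obtain ⟨r, hr, hball⟩ := Metric.isOpen_iff.mp isOpen_compl_range_intCast z hz
  refine ⟨r / 2, half_pos hr, fun w hw m ↦ ?_⟩
  have hrm : r ≤ ‖z + m‖ := by
    by_contra! h
    exact hball (show ((-m : ℤ) : ℂ) ∈ Metric.ball z r by
      rwa [Metric.mem_ball', dist_eq_norm, Int.cast_neg, sub_neg_eq_add]) (mem_range_self (-m))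
  have hwz : ‖z - w‖ < r / 2 := mem_ball_iff_norm'.mp hw
  have := norm_add_le (z - w) (w + m)
  rw [← add_assoc, sub_add_cancel] at this
  linarith

lemma differentiableOn_tsum_add_intCast_zpow {p : ℤ} (hp : p ≤ -2) :
    DifferentiableOn ℂ (fun z : ℂ ↦ ∑' m : ℤ, (z + m : ℂ) ^ p) integerComplement := by
  intro z hz
  obtain ⟨r, hr, hle⟩ := exists_ball_norm_add_intCast_le hz
  have hsum : Summable fun m : ℤ ↦ (‖z + m‖ / 2) ^ p := by
    have := (EisensteinSeries.linear_right_summable z 1 (k := -p) (by lia)).norm.div_const (2 ^ p)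
    simpa [div_zpow] using this
  have hne {w : ℂ} (hw : w ∈ Metric.ball z r) (m : ℤ) : 0 < ‖z + m‖ / 2 ∧ w + m ≠ 0 := by
    have hzm := norm_pos_iff.mpr (integerComplement_add_ne_zero hz m)
    exact ⟨half_pos hzm, fun h ↦ by linarith [hle w hw m, norm_eq_zero.mpr h]⟩
  refine ((differentiableOn_tsum_of_summable_norm hsum (U := Metric.ball z r) (fun m w hw ↦ ?_)
    Metric.isOpen_ball fun m w hw ↦ ?_).differentiableAt
      (Metric.ball_mem_nhds z hr)).differentiableWithinAt
  · have := (hne hw m).2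
    fun_prop (disch := exact .inl this)
  · rw [norm_zpow]
    have hpos := (hne hw m).1
    calc ‖w + m‖ ^ p = (‖w + m‖ ^ (-p))⁻¹ := by rw [zpow_neg, inv_inv]
      _ ≤ ((‖z + m‖ / 2) ^ (-p))⁻¹ := inv_anti₀ (zpow_pos hpos _) <|
        zpow_le_zpow_left₀ (by lia) hpos.le (by linarith [hle w hw m])
      _ = (‖z + m‖ / 2) ^ p := by rw [zpow_neg, inv_inv]

lemma analyticOnNhd_cot_pi_mul :
    AnalyticOnNhd ℂ (fun z ↦ π * cot (π * z)) integerComplement := by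
  refine DifferentiableOn.analyticOnNhd (fun z hz ↦ ?_) isOpen_compl_range_intCast
  have := sin_pi_mul_ne_zero hz
  unfold cot
  fun_prop (disch := assumption)

theorem iteratedDeriv_cot_pi_mul_eqOn_integerComplement {k : ℕ} (hk : 1 ≤ k) :
    EqOn (iteratedDeriv k fun z ↦ π * cot (π * z))
      (fun z : ℂ ↦ (-1) ^ k * k ! * ∑' m : ℤ, (z + m) ^ (-1 - k : ℤ)) integerComplement := by
  have hI : I ∈ UpperHalfPlane.upperHalfPlaneSet := by simp [UpperHalfPlane.upperHalfPlaneSet]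
  refine AnalyticOnNhd.eqOn_of_preconnected_of_eventuallyEq (z₀ := I)
    (fun z hz ↦ analyticAt_iteratedDeriv (analyticOnNhd_cot_pi_mul z hz) k)
    (((differentiableOn_tsum_add_intCast_zpow (p := -1 - k) (by lia)).const_mul _).analyticOnNhd
      isOpen_compl_range_intCast)
    isPreconnected_integerComplement (UpperHalfPlane.coe_mem_integerComplement .I) ?_
  filter_upwards [UpperHalfPlane.isOpen_upperHalfPlaneSet.mem_nhds hI] with z hz
  rw [← iteratedDerivWithin_of_isOpen UpperHalfPlane.isOpen_upperHalfPlaneSet hz]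
  exact iteratedDerivWithin_cot_pi_mul_eq_mul_tsum_zpow hk hz

lemma exp_two_pi_I_mul_ne_one (hz : z ∈ integerComplement) : cexp (2 * π * I * z) ≠ 1 := by
  intro h
  obtain ⟨m, hm⟩ := exp_eq_one_iff.mp h
  refine hz ⟨m, mul_left_cancel₀ two_pi_I_ne_zero ?_⟩
  rw [hm, mul_comm]

lemma pi_mul_cot_pi_mul_add_pi_mul_I (hz : z ∈ integerComplement) :
    π * cot (π * z) + π * I = 2 * π * I * (cexp (2 * π * I * z) / (cexp (2 * π * I * z) - 1)) := by
  have hne := sub_ne_zero.mpr (exp_two_pi_I_mul_ne_one hz).symm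
  rw [cot_pi_eq_exp_ratio, ← neg_sub 1 (cexp _), div_neg, div_mul_eq_div_div_swap, div_I]
  generalize cexp (2 * π * I * z) = q at hne ⊢
  field_simp
  ring

lemma pi_mul_cot_pi_mul_add_pi_mul_I_isBigO :
    (fun z ↦ π * cot (π * z) + π * I) =O[comap im atTop] fun z ↦ Real.exp (-(2 * π) * z.im) := by
  have hexp : (fun z ↦ cexp (2 * π * I * z)) =O[comap im atTop]
      fun z ↦ Real.exp (-(2 * π) * z.im) :=
    .of_norm_eventuallyLE <| .of_forall fun z ↦ by simp [norm_exp]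
  have hinv : (fun z ↦ (cexp (2 * π * I * z) - 1)⁻¹) =O[comap im atTop] fun _ ↦ (1 : ℝ) := by
    have hlim : Tendsto (fun z ↦ cexp (2 * π * I * z)) (comap im atTop) (𝓝 0) :=
      hexp.trans_tendsto <| Real.tendsto_exp_atBot.comp <|
        tendsto_comap.const_mul_atTop_of_neg (by linarith [Real.pi_pos])
    exact ((hlim.sub_const 1).inv₀ (by simp)).isBigO_one ℝ
  refine ((hexp.mul hinv).const_mul_left (2 * π * I)).congr' ?_ (.of_forall fun z ↦ mul_one _)
  filter_upwards [preimage_mem_comap (Ioi_mem_atTop 0)] with z hz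
  exact (pi_mul_cot_pi_mul_add_pi_mul_I (UpperHalfPlane.coe_mem_integerComplement ⟨z, hz⟩)).symm

lemma integral_Ioi_pow_mul_iteratedDeriv_cot_pi_mul (n : ℕ)
    (hz : ∀ y : ℝ, 0 ≤ y → z + y * I ∈ integerComplement) :
    ∫ y : ℝ in Ioi 0, (y : ℂ) ^ n * iteratedDeriv (n + 1) (fun w ↦ π * cot (π * w)) (z + y * I) =
      n ! * I ^ (n + 1) * (π * cot (π * z) + π * I) := by
  have hanalytic : ∀ᶠ w in comap im atTop, AnalyticAt ℂ (fun w ↦ π * cot (π * w)) w := by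
    filter_upwards [preimage_mem_comap (Ioi_mem_atTop 0)] with w hw
    exact analyticOnNhd_cot_pi_mul w (UpperHalfPlane.coe_mem_integerComplement ⟨w, hw⟩)
  simpa using integral_Ioi_pow_smul_iteratedDeriv_vertical (c := -(π * I)) Real.two_pi_pos
    (fun y hy ↦ analyticOnNhd_cot_pi_mul _ (hz y hy)) hanalytic
    (by simpa using pi_mul_cot_pi_mul_add_pi_mul_I_isBigO) n

theorem integral_Ioi_tsum_pow_mul_add_intCast_zpow (n : ℕ)
    (hz : ∀ y : ℝ, 0 ≤ y → z + y * I ∈ integerComplement) :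
    ∫ y : ℝ in Ioi 0, ∑' m : ℤ, (y : ℂ) ^ n * (z + y * I + m) ^ (-((n : ℤ) + 2)) =
      (-I) ^ (n + 1) / (n + 1) * (π * cot (π * z) + π * I) := by
  have hseries (y : ℝ) (hy : y ∈ Ioi 0) :
      (y : ℂ) ^ n * iteratedDeriv (n + 1) (fun w ↦ π * cot (π * w)) (z + y * I) =
        (-1) ^ (n + 1) * (n + 1)! *
          ∑' m : ℤ, (y : ℂ) ^ n * (z + y * I + m) ^ (-((n : ℤ) + 2)) := by
    rw [iteratedDeriv_cot_pi_mul_eqOn_integerComplement (by lia) (hz y (le_of_lt hy)),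
      tsum_mul_left, show (-1 - (n + 1 : ℕ) : ℤ) = -((n : ℤ) + 2) by lia]
    ring
  have hcot := integral_Ioi_pow_mul_iteratedDeriv_cot_pi_mul n hz
  rw [setIntegral_congr_fun measurableSet_Ioi hseries, integral_const_mul, Nat.factorial_succ,
    Nat.cast_mul, Nat.cast_succ] at hcot
  have hn : (n + 1 : ℂ) ≠ 0 := n.cast_add_one_ne_zero
  have hsign : ((-1) ^ (n + 1) * (-1) ^ (n + 1) : ℂ) = 1 := by rw [← mul_pow]; norm_num
  rw [div_mul_eq_mul_div, eq_div_iff hn, neg_pow]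
  have hne : ((-1) ^ (n + 1) * n ! : ℂ) ≠ 0 := by simp [n.factorial_ne_zero]
  apply mul_left_cancel₀ hne
  linear_combination hcot - n ! * I ^ (n + 1) * (π * cot (π * z) + π * I) * hsign

theorem integral_tsum_eval_general (n : ℕ)
    (hτ : ∀ y : ℝ, 0 ≤ y → I * y - τ ∈ integerComplement) :
    ∫ y : ℝ in Ioi 0, ∑' m : ℤ, (y : ℂ) ^ n * (I * y - τ + m) ^ (-((n : ℤ) + 2)) =
      2 ^ (n + 1) * π / ((2 * I) ^ n * (n + 1)) * (1 - cexp (2 * π * I * τ))⁻¹ := by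
  have hray (y : ℝ) : I * y - τ = -τ + y * I := by ring
  have hτ₀ : -τ ∈ integerComplement := by simpa using hτ 0 le_rfl
  have hexp : cexp (2 * π * I * -τ) / (cexp (2 * π * I * -τ) - 1) =
      (1 - cexp (2 * π * I * τ))⁻¹ := by
    rw [mul_neg, exp_neg, ← inv_div, sub_div, one_div, div_self (inv_ne_zero (exp_ne_zero _)),
      inv_inv]
  simp only [hray] at hτ ⊢
  rw [integral_Ioi_tsum_pow_mul_add_intCast_zpow n hτ, pi_mul_cot_pi_mul_add_pi_mul_I hτ₀, hexp]
  have hn : (n + 1 : ℂ) ≠ 0 := n.cast_add_one_ne_zero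
  have hI : (-I) ^ n * I ^ n = 1 := by rw [← mul_pow, neg_mul, I_mul_I, neg_neg, one_pow]
  rw [mul_pow, div_mul_eq_mul_div, div_mul_eq_mul_div, div_eq_div_iff hn (by simp [hn])]
  linear_combination 2 ^ (n + 1) * π * (n + 1) * (1 - cexp (2 * π * I * τ))⁻¹ *
    (hI - (-I) ^ n * I ^ n * I_sq)

end Cotangent

/-- evaluation of `∫₀^∞ Σ_{m∈ℤ} y^{2k-2} (iy-τ+m)^{-2k} dy`. -/
theorem integral_tsum_eval (k : ℕ) (hk : 2 ≤ k) (τ : ℂ) (h0 : 0 < τ.re) (h1 : τ.re < 1) :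
    ∫ y in Set.Ioi (0 : ℝ),
        ∑' m : ℤ, (y : ℂ) ^ (2 * k - 2) * (Complex.I * (y : ℂ) - τ + (m : ℂ)) ^ (-2 * (k : ℤ)) =
      2 ^ (2 * k - 1) * (π : ℂ) / ((2 * Complex.I) ^ (2 * k - 2) * (2 * (k : ℂ) - 1)) *
        (1 - Complex.exp (2 * (π : ℂ) * Complex.I * τ))⁻¹ := by
  have hτ (y : ℝ) (_ : 0 ≤ y) : I * y - τ ∈ integerComplement :=
    mem_integerComplement_of_re_mem_Ioo (m := -1) (by simp [h0, h1])
  have hpow : 2 * k - 2 + 1 = 2 * k - 1 := by lia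
  have hzpow : -(((2 * k - 2 : ℕ) : ℤ) + 2) = -2 * k := by lia
  have hden : ((2 * k - 2 : ℕ) : ℂ) + 1 = 2 * k - 1 := by
    push_cast [Nat.cast_sub (show 2 ≤ 2 * k by lia)]
    ring
  simpa only [hpow, hzpow, hden] using integral_tsum_eval_general (2 * k - 2) hτ

end LHMF
end
end
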